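/- arXiv:2009.11897 — 9 statements merged into one kernel-verified Lean document; each statement's English description precedes it below -/
import Mathlib

section
/- r_6(ℤ_6^2) = 25, i.e., the maximal size of a subset of (ℤ/6ℤ)^2 containing no 6-term arithmetic progression of pairwise distinct elements is exactly 25. -/
/-- `A` contains a `k`-term arithmetic progression `a, a+d, …, a+(k-1)d`
whose terms are pairwise distinct. -/
def IsDistinctAP {G : Type*} [AddCommGroup G] (k : ℕ) (A : Set G) : Prop :=
  ∃ a d : G, (∀ i : Fin k, a + (i : ℕ) • d ∈ A) ∧
    Function.Injective fun i : Fin k => a + (i : ℕ) • d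

/-- `rAP k m n` is the largest cardinality of a subset of `(ℤ/mℤ)^n` containing
no `k`-term arithmetic progression of pairwise distinct elements. -/
noncomputable def rAP (k m n : ℕ) : ℕ :=
  sSup {s : ℕ | ∃ A : Finset (Fin n → ZMod m),
    ¬ IsDistinctAP k (A : Set (Fin n → ZMod m)) ∧ A.card = s}

theorem h6_blk : ∀ b00 b02 b04 b20 b22 b24 b40 b42 b44 : Bool,
  (b00 || b02 || b04) = true →
  (b00 || b20 || b40) = true →
  (b00 || b22 || b44) = true →
  (b00 || b24 || b42) = true →
  (b02 || b22 || b42) = true →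
  (b02 || b24 || b40) = true →
  (b02 || b20 || b44) = true →
  (b04 || b24 || b44) = true →
  (b04 || b20 || b42) = true →
  (b04 || b22 || b40) = true →
  (b20 || b22 || b24) = true →
  (b40 || b42 || b44) = true →
  5 ≤ b00.toNat + b02.toNat + b04.toNat + b20.toNat + b22.toNat + b24.toNat + b40.toNat + b42.toNat + b44.toNat := by decide

theorem h6_or : ∀ a b c d e f : Bool, (a || b || c || d || e || f) = true →
    ((a || d) || (e || b) || (c || f)) = true := by decide

theorem h6_le (a b : Bool) : (a || b).toNat ≤ a.toNat + b.toNat := by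
  revert a b; decide

theorem h6_inj : ∀ c d : ZMod 6, ¬ (2 * c = 0 ∧ 2 * d = 0) → ¬ (3 * c = 0 ∧ 3 * d = 0) →
    ∀ i j : Fin 6, ((i : ℕ) : ZMod 6) * c = ((j : ℕ) : ZMod 6) * c →
      ((i : ℕ) : ZMod 6) * d = ((j : ℕ) : ZMod 6) * d → i = j := by decide

def H6 (M : ZMod 6 → ZMod 6 → Bool) : Prop :=
  ∀ a b c d : ZMod 6, ¬ (2 * c = 0 ∧ 2 * d = 0) → ¬ (3 * c = 0 ∧ 3 * d = 0) →
    (M a b || M (a + c) (b + d) || M (a + 2 * c) (b + 2 * d) || M (a + 3 * c) (b + 3 * d)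
      || M (a + 4 * c) (b + 4 * d) || M (a + 5 * c) (b + 5 * d)) = true

theorem h6_pair0 (M : ZMod 6 → ZMod 6 → Bool) (h : H6 M) :
    5 ≤ ((M 0 0).toNat + (M 0 2).toNat + (M 0 4).toNat + (M 2 0).toNat + (M 2 2).toNat + (M 2 4).toNat + (M 4 0).toNat + (M 4 2).toNat + (M 4 4).toNat)
      + ((M 0 3).toNat + (M 0 5).toNat + (M 0 1).toNat + (M 2 3).toNat + (M 2 5).toNat + (M 2 1).toNat + (M 4 3).toNat + (M 4 5).toNat + (M 4 1).toNat) := by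
  have hb := h6_blk (M 0 0 || M 0 3) (M 0 2 || M 0 5) (M 0 4 || M 0 1) (M 2 0 || M 2 3) (M 2 2 || M 2 5) (M 2 4 || M 2 1) (M 4 0 || M 4 3) (M 4 2 || M 4 5) (M 4 4 || M 4 1)
    (h6_or _ _ _ _ _ _ (h 0 0 0 5 (by decide) (by decide)))
    (h6_or _ _ _ _ _ _ (h 0 0 2 3 (by decide) (by decide)))
    (h6_or _ _ _ _ _ _ (h 0 0 2 5 (by decide) (by decide)))
    (h6_or _ _ _ _ _ _ (h 0 0 2 1 (by decide) (by decide)))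
    (h6_or _ _ _ _ _ _ (h 0 2 2 3 (by decide) (by decide)))
    (h6_or _ _ _ _ _ _ (h 0 2 2 5 (by decide) (by decide)))
    (h6_or _ _ _ _ _ _ (h 0 2 2 1 (by decide) (by decide)))
    (h6_or _ _ _ _ _ _ (h 0 4 2 3 (by decide) (by decide)))
    (h6_or _ _ _ _ _ _ (h 0 4 2 5 (by decide) (by decide)))
    (h6_or _ _ _ _ _ _ (h 0 4 2 1 (by decide) (by decide)))
    (h6_or _ _ _ _ _ _ (h 2 0 0 5 (by decide) (by decide)))
    (h6_or _ _ _ _ _ _ (h 4 0 0 5 (by decide) (by decide)))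
  have := h6_le (M 0 0) (M 0 3)
  have := h6_le (M 0 2) (M 0 5)
  have := h6_le (M 0 4) (M 0 1)
  have := h6_le (M 2 0) (M 2 3)
  have := h6_le (M 2 2) (M 2 5)
  have := h6_le (M 2 4) (M 2 1)
  have := h6_le (M 4 0) (M 4 3)
  have := h6_le (M 4 2) (M 4 5)
  have := h6_le (M 4 4) (M 4 1)
  omega

theorem h6_pair1 (M : ZMod 6 → ZMod 6 → Bool) (h : H6 M) :
    5 ≤ ((M 0 0).toNat + (M 0 2).toNat + (M 0 4).toNat + (M 2 0).toNat + (M 2 2).toNat + (M 2 4).toNat + (M 4 0).toNat + (M 4 2).toNat + (M 4 4).toNat)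
      + ((M 3 0).toNat + (M 3 2).toNat + (M 3 4).toNat + (M 5 0).toNat + (M 5 2).toNat + (M 5 4).toNat + (M 1 0).toNat + (M 1 2).toNat + (M 1 4).toNat) := by
  have hb := h6_blk (M 0 0 || M 3 0) (M 0 2 || M 3 2) (M 0 4 || M 3 4) (M 2 0 || M 5 0) (M 2 2 || M 5 2) (M 2 4 || M 5 4) (M 4 0 || M 1 0) (M 4 2 || M 1 2) (M 4 4 || M 1 4)
    (h6_or _ _ _ _ _ _ (h 0 0 3 2 (by decide) (by decide)))
    (h6_or _ _ _ _ _ _ (h 0 0 5 0 (by decide) (by decide)))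
    (h6_or _ _ _ _ _ _ (h 0 0 5 2 (by decide) (by decide)))
    (h6_or _ _ _ _ _ _ (h 0 0 5 4 (by decide) (by decide)))
    (h6_or _ _ _ _ _ _ (h 0 2 5 0 (by decide) (by decide)))
    (h6_or _ _ _ _ _ _ (h 0 2 5 2 (by decide) (by decide)))
    (h6_or _ _ _ _ _ _ (h 0 2 5 4 (by decide) (by decide)))
    (h6_or _ _ _ _ _ _ (h 0 4 5 0 (by decide) (by decide)))
    (h6_or _ _ _ _ _ _ (h 0 4 5 2 (by decide) (by decide)))
    (h6_or _ _ _ _ _ _ (h 0 4 5 4 (by decide) (by decide)))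
    (h6_or _ _ _ _ _ _ (h 2 0 3 2 (by decide) (by decide)))
    (h6_or _ _ _ _ _ _ (h 4 0 3 2 (by decide) (by decide)))
  have := h6_le (M 0 0) (M 3 0)
  have := h6_le (M 0 2) (M 3 2)
  have := h6_le (M 0 4) (M 3 4)
  have := h6_le (M 2 0) (M 5 0)
  have := h6_le (M 2 2) (M 5 2)
  have := h6_le (M 2 4) (M 5 4)
  have := h6_le (M 4 0) (M 1 0)
  have := h6_le (M 4 2) (M 1 2)
  have := h6_le (M 4 4) (M 1 4)
  omega

theorem h6_pair2 (M : ZMod 6 → ZMod 6 → Bool) (h : H6 M) :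
    5 ≤ ((M 0 0).toNat + (M 0 2).toNat + (M 0 4).toNat + (M 2 0).toNat + (M 2 2).toNat + (M 2 4).toNat + (M 4 0).toNat + (M 4 2).toNat + (M 4 4).toNat)
      + ((M 3 3).toNat + (M 3 5).toNat + (M 3 1).toNat + (M 5 3).toNat + (M 5 5).toNat + (M 5 1).toNat + (M 1 3).toNat + (M 1 5).toNat + (M 1 1).toNat) := by
  have hb := h6_blk (M 0 0 || M 3 3) (M 0 2 || M 3 5) (M 0 4 || M 3 1) (M 2 0 || M 5 3) (M 2 2 || M 5 5) (M 2 4 || M 5 1) (M 4 0 || M 1 3) (M 4 2 || M 1 5) (M 4 4 || M 1 1)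
    (h6_or _ _ _ _ _ _ (h 0 0 3 5 (by decide) (by decide)))
    (h6_or _ _ _ _ _ _ (h 0 0 5 3 (by decide) (by decide)))
    (h6_or _ _ _ _ _ _ (h 0 0 5 5 (by decide) (by decide)))
    (h6_or _ _ _ _ _ _ (h 0 0 5 1 (by decide) (by decide)))
    (h6_or _ _ _ _ _ _ (h 0 2 5 3 (by decide) (by decide)))
    (h6_or _ _ _ _ _ _ (h 0 2 5 5 (by decide) (by decide)))
    (h6_or _ _ _ _ _ _ (h 0 2 5 1 (by decide) (by decide)))
    (h6_or _ _ _ _ _ _ (h 0 4 5 3 (by decide) (by decide)))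
    (h6_or _ _ _ _ _ _ (h 0 4 5 5 (by decide) (by decide)))
    (h6_or _ _ _ _ _ _ (h 0 4 5 1 (by decide) (by decide)))
    (h6_or _ _ _ _ _ _ (h 2 0 3 5 (by decide) (by decide)))
    (h6_or _ _ _ _ _ _ (h 4 0 3 5 (by decide) (by decide)))
  have := h6_le (M 0 0) (M 3 3)
  have := h6_le (M 0 2) (M 3 5)
  have := h6_le (M 0 4) (M 3 1)
  have := h6_le (M 2 0) (M 5 3)
  have := h6_le (M 2 2) (M 5 5)
  have := h6_le (M 2 4) (M 5 1)
  have := h6_le (M 4 0) (M 1 3)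
  have := h6_le (M 4 2) (M 1 5)
  have := h6_le (M 4 4) (M 1 1)
  omega

theorem h6_pair3 (M : ZMod 6 → ZMod 6 → Bool) (h : H6 M) :
    5 ≤ ((M 0 3).toNat + (M 0 5).toNat + (M 0 1).toNat + (M 2 3).toNat + (M 2 5).toNat + (M 2 1).toNat + (M 4 3).toNat + (M 4 5).toNat + (M 4 1).toNat)
      + ((M 3 0).toNat + (M 3 2).toNat + (M 3 4).toNat + (M 5 0).toNat + (M 5 2).toNat + (M 5 4).toNat + (M 1 0).toNat + (M 1 2).toNat + (M 1 4).toNat) := by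
  have hb := h6_blk (M 0 3 || M 3 0) (M 0 5 || M 3 2) (M 0 1 || M 3 4) (M 2 3 || M 5 0) (M 2 5 || M 5 2) (M 2 1 || M 5 4) (M 4 3 || M 1 0) (M 4 5 || M 1 2) (M 4 1 || M 1 4)
    (h6_or _ _ _ _ _ _ (h 0 3 3 5 (by decide) (by decide)))
    (h6_or _ _ _ _ _ _ (h 0 3 5 3 (by decide) (by decide)))
    (h6_or _ _ _ _ _ _ (h 0 3 5 5 (by decide) (by decide)))
    (h6_or _ _ _ _ _ _ (h 0 3 5 1 (by decide) (by decide)))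
    (h6_or _ _ _ _ _ _ (h 0 5 5 3 (by decide) (by decide)))
    (h6_or _ _ _ _ _ _ (h 0 5 5 5 (by decide) (by decide)))
    (h6_or _ _ _ _ _ _ (h 0 5 5 1 (by decide) (by decide)))
    (h6_or _ _ _ _ _ _ (h 0 1 5 3 (by decide) (by decide)))
    (h6_or _ _ _ _ _ _ (h 0 1 5 5 (by decide) (by decide)))
    (h6_or _ _ _ _ _ _ (h 0 1 5 1 (by decide) (by decide)))
    (h6_or _ _ _ _ _ _ (h 2 3 3 5 (by decide) (by decide)))
    (h6_or _ _ _ _ _ _ (h 4 3 3 5 (by decide) (by decide)))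
  have := h6_le (M 0 3) (M 3 0)
  have := h6_le (M 0 5) (M 3 2)
  have := h6_le (M 0 1) (M 3 4)
  have := h6_le (M 2 3) (M 5 0)
  have := h6_le (M 2 5) (M 5 2)
  have := h6_le (M 2 1) (M 5 4)
  have := h6_le (M 4 3) (M 1 0)
  have := h6_le (M 4 5) (M 1 2)
  have := h6_le (M 4 1) (M 1 4)
  omega

theorem h6_pair4 (M : ZMod 6 → ZMod 6 → Bool) (h : H6 M) :
    5 ≤ ((M 0 3).toNat + (M 0 5).toNat + (M 0 1).toNat + (M 2 3).toNat + (M 2 5).toNat + (M 2 1).toNat + (M 4 3).toNat + (M 4 5).toNat + (M 4 1).toNat)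
      + ((M 3 3).toNat + (M 3 5).toNat + (M 3 1).toNat + (M 5 3).toNat + (M 5 5).toNat + (M 5 1).toNat + (M 1 3).toNat + (M 1 5).toNat + (M 1 1).toNat) := by
  have hb := h6_blk (M 0 3 || M 3 3) (M 0 5 || M 3 5) (M 0 1 || M 3 1) (M 2 3 || M 5 3) (M 2 5 || M 5 5) (M 2 1 || M 5 1) (M 4 3 || M 1 3) (M 4 5 || M 1 5) (M 4 1 || M 1 1)
    (h6_or _ _ _ _ _ _ (h 0 3 3 2 (by decide) (by decide)))
    (h6_or _ _ _ _ _ _ (h 0 3 5 0 (by decide) (by decide)))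
    (h6_or _ _ _ _ _ _ (h 0 3 5 2 (by decide) (by decide)))
    (h6_or _ _ _ _ _ _ (h 0 3 5 4 (by decide) (by decide)))
    (h6_or _ _ _ _ _ _ (h 0 5 5 0 (by decide) (by decide)))
    (h6_or _ _ _ _ _ _ (h 0 5 5 2 (by decide) (by decide)))
    (h6_or _ _ _ _ _ _ (h 0 5 5 4 (by decide) (by decide)))
    (h6_or _ _ _ _ _ _ (h 0 1 5 0 (by decide) (by decide)))
    (h6_or _ _ _ _ _ _ (h 0 1 5 2 (by decide) (by decide)))
    (h6_or _ _ _ _ _ _ (h 0 1 5 4 (by decide) (by decide)))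
    (h6_or _ _ _ _ _ _ (h 2 3 3 2 (by decide) (by decide)))
    (h6_or _ _ _ _ _ _ (h 4 3 3 2 (by decide) (by decide)))
  have := h6_le (M 0 3) (M 3 3)
  have := h6_le (M 0 5) (M 3 5)
  have := h6_le (M 0 1) (M 3 1)
  have := h6_le (M 2 3) (M 5 3)
  have := h6_le (M 2 5) (M 5 5)
  have := h6_le (M 2 1) (M 5 1)
  have := h6_le (M 4 3) (M 1 3)
  have := h6_le (M 4 5) (M 1 5)
  have := h6_le (M 4 1) (M 1 1)
  omega

theorem h6_pair5 (M : ZMod 6 → ZMod 6 → Bool) (h : H6 M) :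
    5 ≤ ((M 3 0).toNat + (M 3 2).toNat + (M 3 4).toNat + (M 5 0).toNat + (M 5 2).toNat + (M 5 4).toNat + (M 1 0).toNat + (M 1 2).toNat + (M 1 4).toNat)
      + ((M 3 3).toNat + (M 3 5).toNat + (M 3 1).toNat + (M 5 3).toNat + (M 5 5).toNat + (M 5 1).toNat + (M 1 3).toNat + (M 1 5).toNat + (M 1 1).toNat) := by
  have hb := h6_blk (M 3 0 || M 3 3) (M 3 2 || M 3 5) (M 3 4 || M 3 1) (M 5 0 || M 5 3) (M 5 2 || M 5 5) (M 5 4 || M 5 1) (M 1 0 || M 1 3) (M 1 2 || M 1 5) (M 1 4 || M 1 1)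
    (h6_or _ _ _ _ _ _ (h 3 0 0 5 (by decide) (by decide)))
    (h6_or _ _ _ _ _ _ (h 3 0 2 3 (by decide) (by decide)))
    (h6_or _ _ _ _ _ _ (h 3 0 2 5 (by decide) (by decide)))
    (h6_or _ _ _ _ _ _ (h 3 0 2 1 (by decide) (by decide)))
    (h6_or _ _ _ _ _ _ (h 3 2 2 3 (by decide) (by decide)))
    (h6_or _ _ _ _ _ _ (h 3 2 2 5 (by decide) (by decide)))
    (h6_or _ _ _ _ _ _ (h 3 2 2 1 (by decide) (by decide)))
    (h6_or _ _ _ _ _ _ (h 3 4 2 3 (by decide) (by decide)))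
    (h6_or _ _ _ _ _ _ (h 3 4 2 5 (by decide) (by decide)))
    (h6_or _ _ _ _ _ _ (h 3 4 2 1 (by decide) (by decide)))
    (h6_or _ _ _ _ _ _ (h 5 0 0 5 (by decide) (by decide)))
    (h6_or _ _ _ _ _ _ (h 1 0 0 5 (by decide) (by decide)))
  have := h6_le (M 3 0) (M 3 3)
  have := h6_le (M 3 2) (M 3 5)
  have := h6_le (M 3 4) (M 3 1)
  have := h6_le (M 5 0) (M 5 3)
  have := h6_le (M 5 2) (M 5 5)
  have := h6_le (M 5 4) (M 5 1)
  have := h6_le (M 1 0) (M 1 3)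
  have := h6_le (M 1 2) (M 1 5)
  have := h6_le (M 1 4) (M 1 1)
  omega

theorem h6_sum (M : ZMod 6 → ZMod 6 → Bool) (h : H6 M) :
    11 ≤ ∑ x : ZMod 6, ∑ y : ZMod 6, (M x y).toNat := by
  have h0 := h6_pair0 M h
  have h1 := h6_pair1 M h
  have h2 := h6_pair2 M h
  have h3 := h6_pair3 M h
  have h4 := h6_pair4 M h
  have h5 := h6_pair5 M h
  have e : ∑ x : ZMod 6, ∑ y : ZMod 6, (M x y).toNat = ((M 0 0).toNat + (M 0 1).toNat + (M 0 2).toNat + (M 0 3).toNat + (M 0 4).toNat + (M 0 5).toNat) + ((M 1 0).toNat + (M 1 1).toNat + (M 1 2).toNat + (M 1 3).toNat + (M 1 4).toNat + (M 1 5).toNat) + ((M 2 0).toNat + (M 2 1).toNat + (M 2 2).toNat + (M 2 3).toNat + (M 2 4).toNat + (M 2 5).toNat) + ((M 3 0).toNat + (M 3 1).toNat + (M 3 2).toNat + (M 3 3).toNat + (M 3 4).toNat + (M 3 5).toNat) + ((M 4 0).toNat + (M 4 1).toNat + (M 4 2).toNat + (M 4 3).toNat + (M 4 4).toNat + (M 4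 5).toNat) + ((M 5 0).toNat + (M 5 1).toNat + (M 5 2).toNat + (M 5 3).toNat + (M 5 4).toNat + (M 5 5).toNat) := by
    have e1 : ∀ f : ZMod 6 → ℕ, ∑ x, f x = f 0 + f 1 + f 2 + f 3 + f 4 + f 5 := fun f => Fin.sum_univ_six f
    rw [e1]
    simp only [e1]
  rw [e]
  generalize hs0 : ((M 0 0).toNat + (M 0 2).toNat + (M 0 4).toNat + (M 2 0).toNat + (M 2 2).toNat + (M 2 4).toNat + (M 4 0).toNat + (M 4 2).toNat + (M 4 4).toNat) = s0 at *
  generalize hs1 : ((M 0 3).toNat + (M 0 5).toNat + (M 0 1).toNat + (M 2 3).toNat + (M 2 5).toNat + (M 2 1).toNat + (M 4 3).toNat + (M 4 5).toNat + (M 4 1).toNat) = s1 at *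
  generalize hs2 : ((M 3 0).toNat + (M 3 2).toNat + (M 3 4).toNat + (M 5 0).toNat + (M 5 2).toNat + (M 5 4).toNat + (M 1 0).toNat + (M 1 2).toNat + (M 1 4).toNat) = s2 at *
  generalize hs3 : ((M 3 3).toNat + (M 3 5).toNat + (M 3 1).toNat + (M 5 3).toNat + (M 5 5).toNat + (M 5 1).toNat + (M 1 3).toNat + (M 1 5).toNat + (M 1 1).toNat) = s3 at *
  omega

def B6 (x y : ZMod 6) : Bool :=
  (x == 0 && y == 0) || (x == 0 && y == 4) || (x == 0 && y == 5) || (x == 1 && y == 4) || (x == 1 && y == 5) || (x == 2 && y == 1) || (x == 3 && y == 2) || (x == 3 && y == 5) || (x == 4 && y == 3) || (x == 5 && y == 0) || (x == 5 && y == 5)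

theorem h6_B : ∀ a b c d : ZMod 6, (∃ i : Fin 6, B6 (a + ((i : ℕ) : ZMod 6) * c) (b + ((i : ℕ) : ZMod 6) * d) = true) ∨
    (2 * c = 0 ∧ 2 * d = 0) ∨ (3 * c = 0 ∧ 3 * d = 0) := by decide

theorem h6_card (A : Finset (Fin 2 → ZMod 6)) :
    A.card + ∑ x : ZMod 6, ∑ y : ZMod 6, (!decide (![x, y] ∈ A)).toNat = 36 := by
  have h1 : ∑ x : ZMod 6, ∑ y : ZMod 6, (!decide (![x, y] ∈ A)).toNat = Aᶜ.card := by
    rw [← Fintype.sum_prod_type' (f := fun x y : ZMod 6 => (!decide (![x, y] ∈ A)).toNat)]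
    rw [← Equiv.sum_comp (finTwoArrowEquiv (ZMod 6)), Finset.card_eq_sum_ones,
      ← Finset.sum_subset (Finset.subset_univ Aᶜ)]
    · refine Finset.sum_congr rfl fun f hf => ?_
      have : ![f 0, f 1] = f := by ext i; fin_cases i <;> rfl
      simp at hf
      simp [finTwoArrowEquiv, this, hf]
    · intro f _ hf
      have : ![f 0, f 1] = f := by ext i; fin_cases i <;> rfl
      simp at hf
      simp [finTwoArrowEquiv, this, hf]
  rw [h1, Finset.card_add_card_compl]
  simp [ZMod.card]

theorem h6_upper (A : Finset (Fin 2 → ZMod 6))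
    (hA : ¬ IsDistinctAP 6 (A : Set (Fin 2 → ZMod 6))) : A.card ≤ 25 := by
  have h1 := h6_card A
  have h2 := h6_sum (fun x y => !decide (![x, y] ∈ A)) (by
    intro a b c d h2 h3
    by_contra hne
    apply hA
    refine ⟨![a, b], ![c, d], ?_, ?_⟩
    · simp only [Bool.or_eq_true, Bool.not_eq_true', decide_eq_false_iff_not, not_or, not_not] at hne
      obtain ⟨⟨⟨⟨⟨g0, g1⟩, g2⟩, g3⟩, g4⟩, g5⟩ := hne
      intro i
      fin_cases i <;> simpa
    · intro i j hij
      apply h6_inj c d h2 h3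
      · simpa using congrFun hij 0
      · simpa using congrFun hij 1)
  omega

theorem r6_Z6_two : rAP 6 6 2 = 25 := by
  apply IsGreatest.csSup_eq
  refine ⟨⟨Finset.univ.filter fun f => B6 (f 0) (f 1) = false, ?_, ?_⟩, ?_⟩
  · rintro ⟨a, d, hm, hi⟩
    rcases h6_B (a 0) (a 1) (d 0) (d 1) with ⟨i, h⟩ | ⟨h, h'⟩ | ⟨h, h'⟩
    · have := hm i
      simp [h] at this
    · have : (0 : Fin 6) = 2 := hi (by
        ext k; fin_cases k <;> simp [h, h'])
      exact absurd this (by decide)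
    · have : (0 : Fin 6) = 3 := hi (by
        ext k; fin_cases k <;> simp [h, h'])
      exact absurd this (by decide)
  · decide
  · rintro s ⟨A, hA, rfl⟩
    exact h6_upper A hA
end

section
/- r_6(ℤ_6^3) ≥ 116, i.e., there exists a subset of (ℤ/6ℤ)^3 of size 116 containing no 6-term arithmetic progression of pairwise distinct elements. -/
/-- membership in the explicit 116-element set -/
def mem6 (x y z : ℕ) : Bool :=
  Nat.testBit 56757990407888835034553859456430321553123891542750621192503320350 ((x % 6) * 36 + (y % 6) * 6 + z % 6)

def bad6 (a b c d e f : ℕ) : Bool :=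
  mem6 a b c && mem6 (a + d) (b + e) (c + f) && mem6 (a + 2 * d) (b + 2 * e) (c + 2 * f) &&
  mem6 (a + 3 * d) (b + 3 * e) (c + 3 * f) && mem6 (a + 4 * d) (b + 4 * e) (c + 4 * f) &&
  mem6 (a + 5 * d) (b + 5 * e) (c + 5 * f)

def triv6 (d e f : ℕ) : Bool :=
  (d % 2 == 0 && e % 2 == 0 && f % 2 == 0) || (d % 3 == 0 && e % 3 == 0 && f % 3 == 0)

theorem check6 : ∀ a < 6, ∀ b < 6, ∀ c < 6, ∀ d < 6, ∀ e < 6, ∀ f < 6,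
    (!bad6 a b c d e f || triv6 d e f) = true := by
  decide +kernel

def set6 : Finset (Fin 3 → ZMod 6) :=
  Finset.univ.filter fun v => mem6 (v 0).val (v 1).val (v 2).val = true

theorem card6 : set6.card = 116 := by
  decide +kernel

theorem dbl6 : ∀ x : ZMod 6, x.val % 2 = 0 → 3 • x = 0 := by decide

theorem trp6 : ∀ x : ZMod 6, x.val % 3 = 0 → 2 • x = 0 := by decide

theorem val6 (x y : ZMod 6) (i : ℕ) : (x + i • y).val % 6 = (x.val + i * y.val) % 6 := by
  rw [ZMod.val_add, nsmul_eq_mul, ZMod.val_mul, ZMod.val_natCast]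
  simp [Nat.add_mod, Nat.mul_mod]

theorem mem6_iff (a d : Fin 3 → ZMod 6) (i : ℕ) : a + i • d ∈ set6 ↔
    mem6 ((a 0).val + i * (d 0).val) ((a 1).val + i * (d 1).val)
      ((a 2).val + i * (d 2).val) = true := by
  rw [set6, Finset.mem_filter]
  simp only [Finset.mem_univ, true_and, mem6, Pi.add_apply, Pi.smul_apply, val6]

theorem noAP6 : ¬ IsDistinctAP 6 (set6 : Set (Fin 3 → ZMod 6)) := by
  rintro ⟨a, d, h, hinj⟩
  have hm : ∀ i : Fin 6, _ := fun i => (mem6_iff a d i).1 (Finset.mem_coe.1 (h i))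
  have h0 := hm 0
  have h1 := hm 1
  have h2 := hm 2
  have h3 := hm 3
  have h4 := hm 4
  have h5 := hm 5
  have hc := check6 _ (ZMod.val_lt (a 0)) _ (ZMod.val_lt (a 1)) _ (ZMod.val_lt (a 2))
    _ (ZMod.val_lt (d 0)) _ (ZMod.val_lt (d 1)) _ (ZMod.val_lt (d 2))
  have hb : bad6 (a 0).val (a 1).val (a 2).val (d 0).val (d 1).val (d 2).val = true := by
    simp only [Fin.val_zero, Fin.val_one, zero_mul, one_mul, add_zero] at h0 h1
    simp only [bad6, Bool.and_eq_true]
    exact ⟨⟨⟨⟨⟨h0, h1⟩, h2⟩, h3⟩, h4⟩, h5⟩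
  rw [hb] at hc
  simp only [triv6, Bool.not_true, Bool.false_or, Bool.or_eq_true, Bool.and_eq_true,
    beq_iff_eq] at hc
  rcases hc with ⟨⟨p, q⟩, r⟩ | ⟨⟨p, q⟩, r⟩
  · have hz : 3 • d = 0 := by
      funext j
      fin_cases j
      · exact dbl6 _ p
      · exact dbl6 _ q
      · exact dbl6 _ r
    have : (3 : Fin 6) = 0 := hinj (by
      change a + 3 • d = a + 0 • d
      rw [hz, zero_smul])
    exact absurd this (by decide)
  · have hz : 2 • d = 0 := by
      funext j
      fin_cases j
      · exact trp6 _ p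
      · exact trp6 _ q
      · exact trp6 _ r
    have : (2 : Fin 6) = 0 := hinj (by
      change a + 2 • d = a + 0 • d
      rw [hz, zero_smul])
    exact absurd this (by decide)

theorem r6_Z6_three_lower : 116 ≤ rAP 6 6 3 := by
  refine le_csSup ⟨Fintype.card (Fin 3 → ZMod 6), ?_⟩ ⟨set6, noAP6, card6⟩
  rintro s ⟨A, -, rfl⟩
  exact Finset.card_le_univ A
end

section
/- r_6(ℤ_6^3) ≤ 124, i.e., every subset of (ℤ/6ℤ)^3 of size at least 125 contains a 6-term arithmetic progression of pairwise distinct elements. -/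
namespace R6

abbrev W := ZMod 3 × ZMod 3
abbrev V := ZMod 3 × W

def muN (s : ℕ) : ℕ := max (s - 4) (max (3 * s - 16) (4 * s - 24))

def T {G : Type} [AddCommGroup G] [Fintype G] (g : G → Bool) (d : G) : ℕ :=
  ∑ a : G, (g a && g (a + d) && g (a + d + d)).toNat

def siz {G : Type} [Fintype G] (g : G → Bool) : ℕ := ∑ a : G, (g a).toNat

def P (g : W → Bool) : ℕ := ∑ d ∈ Finset.univ.filter (fun d : W => d ≠ 0), T g d

def L (f : V → Bool) : ℕ := ∑ d ∈ Finset.univ.filter (fun d : V => d ≠ 0), T f d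

def U {G : Type} [AddCommGroup G] [Fintype G] (g : G → Bool) (d : G) : ℕ :=
  ∑ a : G, (g a && g (a + d)).toNat

def Q (f : V → Bool) : ℕ := ∑ c : ZMod 3, siz (fun w => f (c, w)) * siz (fun w => f (c, w))

def L0 (f : V → Bool) : ℕ := ∑ c : ZMod 3, P (fun w => f (c, w))

lemma bool9 : ∀ a b c d e f g h i : Bool,
    muN (a.toNat + b.toNat + c.toNat + d.toNat + e.toNat + f.toNat + g.toNat + h.toNat + i.toNat) ≤
     (a && b && c).toNat + (d && e && f).toNat + (g && h && i).toNat +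
     (a && d && g).toNat + (b && e && h).toNat + (c && f && i).toNat +
     (a && e && i).toNat + (b && f && g).toNat + (c && d && h).toNat +
     (a && f && h).toNat + (b && d && i).toNat + (c && e && g).toNat := by
  decide

lemma sum3 (F : ZMod 3 → ℕ) : ∑ c, F c = F 0 + F 1 + F 2 := by
  exact Fin.sum_univ_three F

lemma filtW : Finset.univ.filter (fun d : W => d ≠ 0) =
    {(0,1),(0,2),(1,0),(2,0),(1,1),(2,2),(1,2),(2,1)} := by decide

lemma tn (a b : Bool) : (a && b).toNat = a.toNat * b.toNat := by
  cases a <;> cases b <;> rfl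

lemma P_ge' (g : W → Bool) : ∃ k, muN (siz g) ≤ k ∧ P g = 6 * k := by
  have h := bool9 (g (0,0)) (g (0,1)) (g (0,2)) (g (1,0)) (g (1,1)) (g (1,2))
    (g (2,0)) (g (2,1)) (g (2,2))
  have hs : siz g = (g (0,0)).toNat + (g (0,1)).toNat + (g (0,2)).toNat + (g (1,0)).toNat +
     (g (1,1)).toNat + (g (1,2)).toNat + (g (2,0)).toNat + (g (2,1)).toNat + (g (2,2)).toNat := by
    unfold siz
    rw [Fintype.sum_prod_type]
    simp only [sum3]
    ring
  rw [← hs] at h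
  refine ⟨_, h, ?_⟩
  have e11 : (1 : ZMod 3) + 1 = 2 := by decide
  have e12 : (1 : ZMod 3) + 2 = 0 := by decide
  have e21 : (2 : ZMod 3) + 1 = 0 := by decide
  have e22 : (2 : ZMod 3) + 2 = 1 := by decide
  unfold P
  rw [filtW]
  rw [Finset.sum_insert (by decide), Finset.sum_insert (by decide), Finset.sum_insert (by decide),
    Finset.sum_insert (by decide), Finset.sum_insert (by decide), Finset.sum_insert (by decide),
    Finset.sum_insert (by decide), Finset.sum_singleton]
  simp only [T, Fintype.sum_prod_type, sum3, Prod.mk_add_mk, e11, e12, e21, e22, zero_add, add_zero,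
    tn]
  ring

lemma P_ge (g : W → Bool) : 6 * muN (siz g) ≤ P g := by
  obtain ⟨k, h, h'⟩ := P_ge' g
  omega

def Y (g0 g1 g2 : W → Bool) : ℕ := ∑ x : W, ∑ y : W, (g0 x && g1 y && g2 (-x - y)).toNat

lemma siz_comp {G : Type} [Fintype G] (e : G ≃ G) (g : G → Bool) : siz (fun x => g (e x)) = siz g :=
  Equiv.sum_comp e (fun x => (g x).toNat)

lemma Y_ge (g0 g1 g2 : W → Bool) : siz g0 * (siz g1 + siz g2 - 9) ≤ Y g0 g1 g2 := by
  unfold Y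
  conv_lhs => unfold siz
  rw [Finset.sum_mul]
  refine Finset.sum_le_sum fun x _ => ?_
  cases hx : g0 x
  · simp
  · simp only [Bool.toNat_true, one_mul, Bool.true_and]
    have h1 : ∑ y : W, (g2 y).toNat = ∑ y : W, (g2 (-x - y)).toNat :=
      (siz_comp (Equiv.subLeft (-x)) g2).symm
    rw [h1, ← Finset.sum_add_distrib, Nat.sub_le_iff_le_add]
    have h9 : (9 : ℕ) = ∑ y : W, 1 := by decide
    rw [h9, ← Finset.sum_add_distrib]
    refine Finset.sum_le_sum fun y _ => ?_
    cases g1 y <;> cases g2 (-x - y) <;> decide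

lemma Y_swap (g0 g1 g2 : W → Bool) : Y g0 g1 g2 = Y g1 g0 g2 := by
  unfold Y
  rw [Finset.sum_comm]
  refine Finset.sum_congr rfl fun x _ => Finset.sum_congr rfl fun y _ => ?_
  rw [Bool.and_comm (g0 y), show -y - x = -x - y by abel]

lemma Y_swap2 (g0 g1 g2 : W → Bool) : Y g0 g1 g2 = Y g0 g2 g1 := by
  unfold Y
  refine Finset.sum_congr rfl fun x _ => ?_
  rw [← Equiv.sum_comp (Equiv.subLeft (-x))]
  refine Finset.sum_congr rfl fun y _ => ?_
  simp only [Equiv.subLeft_apply, sub_sub_cancel]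
  rw [Bool.and_assoc, Bool.and_assoc, Bool.and_comm (g1 _)]

lemma siz_le (g : W → Bool) : siz g ≤ 9 := by
  have h9 : (9 : ℕ) = ∑ y : W, 1 := by decide
  rw [h9]
  exact Finset.sum_le_sum fun y _ => Bool.toNat_le _

lemma numeric : ∀ a ≤ 9, ∀ b ≤ 9, ∀ c ≤ 9,
    3 * (a + b + c) ≤ 32 + (muN a + muN b + muN c) + a * (b + c - 9) ∨
    3 * (a + b + c) ≤ 32 + (muN a + muN b + muN c) + b * (a + c - 9) ∨
    3 * (a + b + c) ≤ 32 + (muN a + muN b + muN c) + c * (a + b - 9) ∨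
    24 * (a + b + c) + 13 * (a * a + b * b + c * c) <
      264 + 4 * ((a + b + c) * (a + b + c)) + 9 * (a + b + c) + 26 * (muN a + muN b + muN c) := by
  decide +kernel

lemma L0_eq (f : V → Bool) :
    L0 f = ∑ d ∈ Finset.univ.filter (fun d : W => d ≠ 0), T f (0, d) := by
  unfold L0 P T
  rw [Finset.sum_comm]
  refine Finset.sum_congr rfl fun d _ => ?_
  rw [Fintype.sum_prod_type]
  simp

lemma sum_split {G : Type} [AddCommGroup G] [Fintype G] [DecidableEq G] (H : G → ℕ) :
    ∑ d, H d = H 0 + ∑ d ∈ Finset.univ.filter (fun d : G => d ≠ 0), H d := by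
  rw [Finset.filter_ne', Finset.add_sum_erase _ _ (Finset.mem_univ _)]

lemma L_split (f : V → Bool) : L f = L0 f +
    6 * Y (fun w => f (0, w)) (fun w => f (1, w)) (fun w => f (2, w)) := by
  have e12 : (1 : ZMod 3) + 1 = 2 := by decide
  have e21 : (2 : ZMod 3) + 1 = 0 := by decide
  have e12' : (1 : ZMod 3) + 2 = 0 := by decide
  have e22 : (2 : ZMod 3) + 2 = 1 := by decide
  set g0 := fun w => f (0, w) with hg0
  set g1 := fun w => f (1, w) with hg1
  set g2 := fun w => f (2, w) with hg2
  have hA : L f = L0 f + (∑ d : W, T f (1, d) + ∑ d : W, T f (2, d)) := by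
    have h := sum_split (T f)
    have h' := sum_split (fun d : W => T f (0, d))
    rw [L0_eq]
    unfold L
    rw [Fintype.sum_prod_type, sum3] at h
    have : T f ((0 : ZMod 3), (0 : W)) = T f 0 := rfl
    omega
  have hB : ∀ g h k : W → Bool,
      ∑ d : W, ∑ a : W, (g a && h (a + d) && k (a + d + d)).toNat = Y g h k := by
    intro g h k
    unfold Y
    rw [Finset.sum_comm]
    refine Finset.sum_congr rfl fun x _ => ?_
    rw [← Equiv.sum_comp (Equiv.addLeft x) (fun y => (g x && h y && k (-x - y)).toNat)]
    refine Finset.sum_congr rfl fun d _ => ?_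
    simp only [Equiv.coe_addLeft]
    rw [show x + d + d = -x - (x + d) by
      revert x d; decide]
  have h1 : ∑ d : W, T f (1, d) = Y g0 g1 g2 + Y g1 g2 g0 + Y g2 g0 g1 := by
    simp only [← hB, ← Finset.sum_add_distrib]
    refine Finset.sum_congr rfl fun d _ => ?_
    unfold T
    rw [Fintype.sum_prod_type, sum3]
    simp only [Prod.mk_add_mk, e12, e21, zero_add, hg0, hg1, hg2, Finset.sum_add_distrib]
  have h2 : ∑ d : W, T f (2, d) = Y g0 g2 g1 + Y g1 g0 g2 + Y g2 g1 g0 := by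
    simp only [← hB, ← Finset.sum_add_distrib]
    refine Finset.sum_congr rfl fun d _ => ?_
    unfold T
    rw [Fintype.sum_prod_type, sum3]
    simp only [Prod.mk_add_mk, e12', e22, zero_add, hg0, hg1, hg2, Finset.sum_add_distrib]
  rw [hA, h1, h2, Y_swap2 g1 g2 g0, Y_swap g1 g0 g2, Y_swap g2 g0 g1, Y_swap2 g0 g2 g1,
    Y_swap g2 g1 g0, Y_swap2 g1 g2 g0, Y_swap g1 g0 g2]
  ring

lemma six_dvd (f : V → Bool) : 6 ∣ L f := by
  rw [L_split]
  refine dvd_add (Finset.dvd_sum fun c _ => ?_) (dvd_mul_right _ _)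
  obtain ⟨k, h, h'⟩ := P_ge' (fun w => f (c, w))
  exact ⟨k, h'⟩

lemma key (f : V → Bool) : 18 * siz f ≤ 192 + L f ∨
    72 * siz f + 39 * Q f < 792 + 12 * (siz f * siz f) + 27 * siz f + 13 * L0 f := by
  have hs : siz f = siz (fun w => f (0, w)) + siz (fun w => f (1, w)) + siz (fun w => f (2, w)) := by
    unfold siz
    rw [Fintype.sum_prod_type, sum3]
  have h0 : L0 f = P (fun w => f (0, w)) + P (fun w => f (1, w)) + P (fun w => f (2, w)) := by
    unfold L0; rw [sum3]
  have hQ : Q f = siz (fun w => f (0, w)) * siz (fun w => f (0, w)) +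
      siz (fun w => f (1, w)) * siz (fun w => f (1, w)) +
      siz (fun w => f (2, w)) * siz (fun w => f (2, w)) := by
    unfold Q; rw [sum3]
  have hL := L_split f
  set g0 := fun w => f (0, w)
  set g1 := fun w => f (1, w)
  set g2 := fun w => f (2, w)
  have p0 := P_ge g0
  have p1 := P_ge g1
  have p2 := P_ge g2
  have y0 := Y_ge g0 g1 g2
  have y1 := Y_ge g1 g0 g2
  rw [← Y_swap] at y1
  have y2 := Y_ge g2 g0 g1
  rw [Y_swap g2, Y_swap2 g0 g2] at y2
  rcases numeric _ (siz_le g0) _ (siz_le g1) _ (siz_le g2) with h | h | h | h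
  · left; omega
  · left; omega
  · left; omega
  · right
    rw [← hs, ← hQ] at h
    generalize siz f * siz f = q at *
    omega

abbrev I := W ⊕ (ZMod 3 ⊕ Unit)

def M : I → (V ≃+ V)
  | .inl (b, c) =>
    { toFun := fun v => (v.1 - b * v.2.1 - c * v.2.2, v.2.1, v.2.2)
      invFun := fun v => (v.1 + b * v.2.1 + c * v.2.2, v.2.1, v.2.2)
      left_inv := by rintro ⟨x, y, z⟩; ext <;> simp <;> ring
      right_inv := by rintro ⟨x, y, z⟩; ext <;> simp <;> ring
      map_add' := by rintro ⟨x, y, z⟩ ⟨x', y', z'⟩; ext <;> simp <;> ring }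
  | .inr (.inl c) =>
    { toFun := fun v => (v.2.1, v.1 - c * v.2.2, v.2.2)
      invFun := fun v => (v.2.1 + c * v.2.2, v.1, v.2.2)
      left_inv := by rintro ⟨x, y, z⟩; simp
      right_inv := by rintro ⟨x, y, z⟩; simp
      map_add' := by rintro ⟨x, y, z⟩ ⟨x', y', z'⟩; ext <;> simp; ring }
  | .inr (.inr _) =>
    { toFun := fun v => (v.2.1, v.2.2, v.1)
      invFun := fun v => (v.2.2, v.1, v.2.1)
      left_inv := by rintro ⟨x, y, z⟩; simp
      right_inv := by rintro ⟨x, y, z⟩; simp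
      map_add' := by rintro ⟨x, y, z⟩ ⟨x', y', z'⟩; simp }

lemma T_comp (f : V → Bool) (e : V ≃+ V) (d : V) : T (fun v => f (e v)) d = T f (e d) := by
  unfold T
  rw [← Equiv.sum_comp e.toEquiv (fun a => (f a && f (a + e d) && f (a + e d + e d)).toNat)]
  simp

lemma L_comp (f : V → Bool) (e : V ≃+ V) : L (fun v => f (e v)) = L f := by
  unfold L
  simp only [T_comp]
  refine Finset.sum_nbij' e e.symm ?_ ?_ ?_ ?_ ?_ <;> simp

lemma countM : ∀ v : V, v ≠ 0 → (Finset.univ.filter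
    (fun p : I × W => p.2 ≠ 0 ∧ M p.1 (0, p.2) = v)).card = 4 := by
  decide +kernel

lemma sumH (H : V → ℕ) :
    ∑ i : I, ∑ d ∈ Finset.univ.filter (fun d : W => d ≠ 0), H (M i (0, d)) =
    4 * ∑ d ∈ Finset.univ.filter (fun d : V => d ≠ 0), H d := by
  rw [← Finset.sum_product']
  rw [← Finset.sum_fiberwise_of_maps_to (s := Finset.univ ×ˢ Finset.univ.filter (fun d : W => d ≠ 0))
    (t := Finset.univ.filter (fun d : V => d ≠ 0)) (g := fun p : I × W => M p.1 (0, p.2))]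
  · rw [Finset.mul_sum]
    refine Finset.sum_congr rfl fun v hv => ?_
    have hv' : v ≠ 0 := by simpa using hv
    rw [← countM v hv', ← smul_eq_mul, ← Finset.sum_const]
    refine Finset.sum_congr ?_ ?_
    · ext p; simp
    · intro p hp
      simp at hp
      rw [hp.2]
  · intro p hp
    simp at hp ⊢
    exact hp

lemma sumM (f : V → Bool) : ∑ i : I, L0 (fun v => f (M i v)) = 4 * L f := by
  simp only [L0_eq, T_comp]
  exact sumH _

lemma siz_sq {G : Type} [AddCommGroup G] [Fintype G] (g : G → Bool) :
    siz g * siz g = ∑ d, U g d := by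
  unfold siz U
  rw [Finset.sum_mul, Finset.sum_comm]
  refine Finset.sum_congr rfl fun x _ => ?_
  rw [Finset.mul_sum, ← Equiv.sum_comp (Equiv.addLeft x) (fun y => (g x).toNat * (g y).toNat)]
  simp [tn]

lemma U_zero {G : Type} [AddCommGroup G] [Fintype G] (g : G → Bool) : U g 0 = siz g := by
  simp [U, siz]

lemma Q_eq (f : V → Bool) :
    Q f = siz f + ∑ d ∈ Finset.univ.filter (fun d : W => d ≠ 0), U f (0, d) := by
  unfold Q
  simp only [siz_sq]
  rw [Finset.sum_comm]
  have h : ∀ d : W, ∑ c : ZMod 3, U (fun w => f (c, w)) d = U f (0, d) := by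
    intro d
    unfold U
    rw [Fintype.sum_prod_type]
    simp
  simp only [h]
  rw [sum_split]
  rw [show U f ((0 : ZMod 3), (0 : W)) = siz f from U_zero f]

lemma U_comp (f : V → Bool) (e : V ≃+ V) (d : V) : U (fun v => f (e v)) d = U f (e d) := by
  unfold U
  rw [← Equiv.sum_comp e.toEquiv (fun a => (f a && f (a + e d)).toNat)]
  simp

lemma siz_M (f : V → Bool) (i : I) : siz (fun v => f (M i v)) = siz f :=
  siz_comp (M i).toEquiv f

lemma cardI : (Finset.univ : Finset I).card = 13 := by decide

lemma sumQ (f : V → Bool) :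
    ∑ i : I, Q (fun v => f (M i v)) = 4 * (siz f * siz f) + 9 * siz f := by
  simp only [Q_eq, U_comp, siz_M]
  rw [Finset.sum_add_distrib, sumH, Finset.sum_const, cardI, siz_sq, sum_split (U f), U_zero]
  simp only [smul_eq_mul]
  ring

lemma main_ineq (f : V → Bool) : 18 * siz f ≤ 192 + L f := by
  by_contra hc
  have h : ∀ i : I, 72 * siz f + 39 * Q (fun v => f (M i v)) <
      792 + 12 * (siz f * siz f) + 27 * siz f + 13 * L0 (fun v => f (M i v)) := by
    intro i
    have := key (fun v => f (M i v))
    rw [L_comp, siz_M] at this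
    exact this.resolve_left hc
  have h2 := Finset.sum_le_sum (s := Finset.univ) fun i _ => Nat.succ_le_of_lt (h i)
  obtain ⟨k, hk⟩ := six_dvd f
  simp only [Nat.succ_eq_add_one] at h2
  simp only [Finset.sum_add_distrib, ← Finset.mul_sum, sumM, sumQ, Finset.sum_const, cardI,
    smul_eq_mul] at h2
  clear h
  have hc' : 33 + k ≤ 3 * siz f := by omega
  rw [hk] at h2
  nlinarith

abbrev B := ZMod 2 × ZMod 2 × ZMod 2

noncomputable def q : ZMod 2 × ZMod 3 ≃+ ZMod 6 :=
  (ZMod.chineseRemainder (show Nat.Coprime 2 3 by decide)).symm.toAddEquiv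

noncomputable def E : B × V ≃+ (Fin 3 → ZMod 6) where
  toFun p := ![q (p.1.1, p.2.1), q (p.1.2.1, p.2.2.1), q (p.1.2.2, p.2.2.2)]
  invFun x := (((q.symm (x 0)).1, (q.symm (x 1)).1, (q.symm (x 2)).1),
    ((q.symm (x 0)).2, (q.symm (x 1)).2, (q.symm (x 2)).2))
  left_inv := by rintro ⟨⟨a, b, c⟩, ⟨x, y, z⟩⟩; simp
  right_inv := by
    intro x
    ext i
    fin_cases i <;> simp
  map_add' := by
    rintro ⟨⟨a, b, c⟩, ⟨x, y, z⟩⟩ ⟨⟨a', b', c'⟩, ⟨x', y', z'⟩⟩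
    ext i
    fin_cases i <;> simp [← map_add]

lemma decB : ∀ u v : B, ∀ i : Fin 6, u + (i : ℕ) • (u - v) = u ∨ u + (i : ℕ) • (u - v) = v := by
  decide +kernel

lemma decB2 : ∀ w : B, w ≠ 0 → ∀ i j : Fin 6, (i : ℕ) • w = (j : ℕ) • w →
    (i : ℕ) % 2 = (j : ℕ) % 2 := by
  decide +kernel

lemma decV : ∀ d : V, ∀ i : Fin 6, (i : ℕ) • d = 0 ∨ (i : ℕ) • d = d ∨ (i : ℕ) • d = d + d := by
  decide +kernel

lemma decV2 : ∀ w : V, w ≠ 0 → ∀ i j : Fin 6, (i : ℕ) • w = (j : ℕ) • w →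
    (i : ℕ) % 3 = (j : ℕ) % 3 := by
  decide +kernel

lemma ap_of (A : Set (Fin 3 → ZMod 6)) (u v : B) (huv : u ≠ v) (a d : V) (hd : d ≠ 0)
    (h : ∀ w : B, w = u ∨ w = v → ∀ x : V, x = a ∨ x = a + d ∨ x = a + d + d → E (w, x) ∈ A) :
    IsDistinctAP 6 A := by
  have hE : ∀ i : Fin 6, E (u, a) + (i : ℕ) • E (u - v, d) =
      E (u + (i : ℕ) • (u - v), a + (i : ℕ) • d) := by
    intro i
    rw [← map_nsmul, ← map_add]
    rfl
  refine ⟨E (u, a), E (u - v, d), ?_, ?_⟩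
  · intro i
    rw [hE]
    refine h _ (decB u v i) _ ?_
    rcases decV d i with h | h | h <;> rw [h]
    · simp
    · simp
    · right; right; rw [add_assoc]
  · intro i j hij
    simp only [hE] at hij
    have := E.injective hij
    rw [Prod.mk.injEq, add_right_inj, add_right_inj] at this
    have h2 := decB2 _ (sub_ne_zero.mpr huv) i j this.1
    have h3 := decV2 _ hd i j this.2
    have hi := i.2
    have hj := j.2
    apply Fin.ext
    omega

lemma final (A : Finset (Fin 3 → ZMod 6)) (hA : ¬ IsDistinctAP 6 (A : Set (Fin 3 → ZMod 6))) :
    A.card ≤ 124 := by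
  let f : B → V → Bool := fun u x => decide (E (u, x) ∈ A)
  have hcard : A.card = ∑ u, siz (f u) := by
    unfold siz
    rw [← Fintype.sum_prod_type' (f := fun u x => (f u x).toNat)]
    have h1 : A.card = ∑ x : Fin 3 → ZMod 6, (decide (x ∈ A)).toNat := by
      rw [← Finset.filter_univ_mem A, Finset.card_filter]
      refine Finset.sum_congr rfl fun x _ => ?_
      by_cases h : x ∈ A <;> simp [h]
    rw [h1, ← Equiv.sum_comp E.toEquiv]
    rfl
  have hL : ∑ u, L (f u) ≤ 702 := by
    unfold L T
    rw [Finset.sum_comm]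
    have h702 : (702 : ℕ) = ∑ d ∈ Finset.univ.filter (fun d : V => d ≠ 0), ∑ a : V, 1 := by
      decide +kernel
    rw [h702]
    refine Finset.sum_le_sum fun d hd => ?_
    rw [Finset.sum_comm]
    refine Finset.sum_le_sum fun a _ => ?_
    have hd' : d ≠ 0 := by simpa using hd
    by_contra hc
    apply hA
    have : ∑ u : B, (f u a && f u (a + d) && f u (a + d + d)).toNat =
        (Finset.univ.filter (fun u : B => (f u a && f u (a + d) && f u (a + d + d)) = true)).card := by
      rw [Finset.card_filter]
      refine Finset.sum_congr rfl fun u _ => ?_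
      cases (f u a && f u (a + d) && f u (a + d + d)) <;> rfl
    rw [this, not_le, Finset.one_lt_card] at hc
    obtain ⟨u, hu, v, hv, huv⟩ := hc
    simp [f] at hu hv
    refine ap_of _ u v huv a d hd' ?_
    rintro w (rfl | rfl) x (rfl | rfl | rfl) <;> simp_all
  have h := Finset.sum_le_sum (s := Finset.univ) fun u _ => main_ineq (f u)
  rw [← Finset.mul_sum, ← hcard, Finset.sum_add_distrib, Finset.sum_const,
    show (Finset.univ : Finset B).card = 8 by decide, smul_eq_mul] at h
  omega

end R6

theorem r6_Z6_three_upper : rAP 6 6 3 ≤ 124 := by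
  refine csSup_le' ?_
  rintro s ⟨A, hA, rfl⟩
  exact R6.final A hA
end

section
/- There exists N such that for all n ≥ N, r_6(ℤ_6^n) ≤ 5.709^n; i.e., for all sufficiently large n, every subset of (ℤ/6ℤ)^n containing no 6-term arithmetic progression of pairwise distinct elements has size at most 5.709^n. -/
open Finset

theorem exists_large_support {F ι : Type*} [Field F] [DecidableEq F] [Fintype ι]
    (V : Submodule F (ι → F)) :
    ∃ h ∈ V, Module.finrank F V ≤ (univ.filter fun i => h i ≠ 0).card := by
  classical
  obtain ⟨h, hV, hmax⟩ : ∃ h ∈ V, ∀ g ∈ V,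
      (univ.filter fun i => g i ≠ 0).card ≤ (univ.filter fun i => h i ≠ 0).card := by
    have hb : BddAbove {k : ℕ | ∃ g ∈ V, (univ.filter fun i => g i ≠ 0).card = k} :=
      ⟨Fintype.card ι, by rintro k ⟨g, -, rfl⟩; exact Finset.card_le_univ _⟩
    obtain ⟨h, hV, hk⟩ := Nat.sSup_mem
      (s := {k : ℕ | ∃ g ∈ V, (univ.filter fun i => g i ≠ 0).card = k}) ⟨_, 0, V.zero_mem, rfl⟩ hb
    exact ⟨h, hV, fun g hg => hk ▸ le_csSup hb ⟨g, hg, rfl⟩⟩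
  refine ⟨h, hV, ?_⟩
  by_contra! hlt
  let R : V →ₗ[F] ({i // h i ≠ 0} → F) :=
    (LinearMap.funLeft F F (Subtype.val : {i // h i ≠ 0} → ι)).comp V.subtype
  have hlt' : Module.finrank F ({i // h i ≠ 0} → F) < Module.finrank F V := by
    simpa [Fintype.card_subtype] using hlt
  have hk := LinearMap.ker_ne_bot_of_finrank_lt (f := R) hlt'
  obtain ⟨v, hv, hv0⟩ := Submodule.exists_mem_ne_zero_of_ne_bot hk
  have hv1 : ∀ i, h i ≠ 0 → v.1 i = 0 := fun i hi => by
    have := congrFun (LinearMap.mem_ker.1 hv) ⟨i, hi⟩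
    simpa [R] using this
  obtain ⟨j, hj⟩ : ∃ j, v.1 j ≠ 0 := by
    by_contra! hc
    exact hv0 (Subtype.ext (funext hc))
  have hhj : h j = 0 := by
    by_contra hc; exact hj (hv1 j hc)
  have := hmax (h + v.1) (V.add_mem hV v.2)
  refine absurd this (not_le.2 (Finset.card_lt_card ?_))
  rw [Finset.ssubset_iff_of_subset]
  · exact ⟨j, by simp [hhj, hj], by simp [hhj]⟩
  · intro i hi
    simp only [mem_filter, mem_univ, true_and, Pi.add_apply] at hi ⊢
    rwa [hv1 i hi, add_zero]

/-- monomials -/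
def mon {m : ℕ} (e : Fin m → Fin 3) (x : Fin m → ZMod 3) : ZMod 3 := ∏ i, x i ^ (e i : ℕ)

/-- low degree exponents -/
def low (m : ℕ) : Finset (Fin m → Fin 3) := univ.filter fun e => 3 * ∑ i, (e i : ℕ) ≤ 2 * m

/-- coefficients of the polynomial 1-(x+y+z)^2 -/
def cf (p : Fin 3 × Fin 3 × Fin 3) : ZMod 3 :=
  if (p.1 : ℕ) + p.2.1 + p.2.2 = 0 then 1 else
  if (p.1 : ℕ) + p.2.1 + p.2.2 = 2 then
    (if p.1 = 2 ∨ p.2.1 = 2 ∨ p.2.2 = 2 then -1 else 1) else 0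

theorem cf_spec (x y z : ZMod 3) : (if x + y + z = 0 then 1 else 0 : ZMod 3) =
    ∑ p : Fin 3 × Fin 3 × Fin 3, cf p * x ^ (p.1 : ℕ) * y ^ (p.2.1 : ℕ) * z ^ (p.2.2 : ℕ) := by
  simp only [Fintype.sum_prod_type, Fin.sum_univ_three]
  revert x y z
  decide

theorem cf_deg (p : Fin 3 × Fin 3 × Fin 3) (h : cf p ≠ 0) : (p.1 : ℕ) + p.2.1 + p.2.2 ≤ 2 := by
  revert p; decide

theorem expand {m : ℕ} (x y z : Fin m → ZMod 3) : (if x + y + z = 0 then 1 else 0 : ZMod 3) =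
    ∑ p : Fin m → Fin 3 × Fin 3 × Fin 3, (∏ i, cf (p i)) * mon (fun i => (p i).1) x *
      mon (fun i => (p i).2.1) y * mon (fun i => (p i).2.2) z := by
  have h1 : (if x + y + z = 0 then 1 else 0 : ZMod 3) =
      ∏ i, (if x i + y i + z i = 0 then 1 else 0 : ZMod 3) := by
    rw [Finset.prod_ite_zero]
    simp [funext_iff]
  rw [h1]
  simp_rw [cf_spec]
  rw [Finset.prod_univ_sum]
  simp only [Fintype.piFinset_univ, mon, ← Finset.prod_mul_distrib]

theorem low_cases {m : ℕ} (p : Fin m → Fin 3 × Fin 3 × Fin 3) (h : (∏ i, cf (p i)) ≠ 0) :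
    (fun i => (p i).1) ∈ low m ∨ (fun i => (p i).2.1) ∈ low m ∨ (fun i => (p i).2.2) ∈ low m := by
  have h2 : ∑ i, (((p i).1 : ℕ) + (p i).2.1 + (p i).2.2) ≤ ∑ i : Fin m, 2 :=
    Finset.sum_le_sum fun i _ => cf_deg _ fun h0 => h (Finset.prod_eq_zero (mem_univ i) h0)
  simp only [Finset.sum_add_distrib, Finset.sum_const, Finset.card_univ, Fintype.card_fin, smul_eq_mul] at h2
  simp only [low, mem_filter, mem_univ, true_and]
  omega

/-- evaluation of a weight against low monomials -/
def tmap {m : ℕ} {ι : Type*} [Fintype ι] (pt : ι → Fin m → ZMod 3) :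
    (ι → ZMod 3) →ₗ[ZMod 3] (low m → ZMod 3) where
  toFun h e := ∑ i, h i * mon e.1 (pt i)
  map_add' f g := by ext e; simp [add_mul, Finset.sum_add_distrib]
  map_smul' c f := by ext e; simp [Finset.mul_sum, mul_assoc]

theorem tmap_ker {m : ℕ} {ι : Type*} [Fintype ι] (pt : ι → Fin m → ZMod 3) :
    Fintype.card ι ≤ Module.finrank (ZMod 3) (LinearMap.ker (tmap pt)) + (low m).card := by
  have h1 := LinearMap.finrank_range_add_finrank_ker (tmap pt)
  have h2 := Submodule.finrank_le (LinearMap.range (tmap pt))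
  simp at h1 h2
  omega

theorem cap_bound {m : ℕ} {ι : Type*} [Fintype ι] (pt : ι → Fin m → ZMod 3)
    (hpt : ∀ i j k, pt i + pt j + pt k = 0 → i = j ∧ j = k) :
    Fintype.card ι ≤ 3 * (low m).card := by
  classical
  have h3 : ∀ i, pt i + pt i + pt i = 0 := fun i => by
    ext k; simp only [Pi.add_apply, Pi.zero_apply]; generalize pt i k = x; revert x; decide
  obtain ⟨h, hV, hS⟩ := exists_large_support (LinearMap.ker (tmap pt))
  have hV' : ∀ e ∈ low m, ∑ i, h i * mon e (pt i) = 0 := fun e he =>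
    congrFun (LinearMap.mem_ker.1 hV) ⟨e, he⟩
  have k1 := tmap_ker pt
  let S := {i // h i ≠ 0}
  let ps : S → Fin m → ZMod 3 := fun i => pt i.1
  have k2 := tmap_ker ps
  have hSc : Fintype.card S = (univ.filter fun i => h i ≠ 0).card := Fintype.card_subtype _
  let U := LinearMap.ker (tmap ps)
  let M : (S → ZMod 3) →ₗ[ZMod 3] (S → ZMod 3) :=
    { toFun := fun u s => u s * h s.1
      map_add' := fun f g => by ext; simp [add_mul]
      map_smul' := fun c f => by ext; simp [mul_assoc] }
  have hM : Function.Injective M := fun u v huv => by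
    ext s
    exact mul_right_cancel₀ s.2 (congrFun huv s)
  let W : Submodule (ZMod 3) (S → ZMod 3) :=
    Submodule.span (ZMod 3) (((low m).image fun e => fun s : S => mon e (ps s) : Finset _) : Set (S → ZMod 3))
  have hW : Module.finrank (ZMod 3) W ≤ (low m).card :=
    (finrank_span_finset_le_card _).trans Finset.card_image_le
  have hle : U.map M ≤ W := by
    rintro _ ⟨u, hu, rfl⟩
    have hu' : ∀ e ∈ low m, ∑ i, u i * mon e (ps i) = 0 := fun e he =>
      congrFun (LinearMap.mem_ker.1 hu) ⟨e, he⟩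
    have key : M u = ∑ p : Fin m → Fin 3 × Fin 3 × Fin 3,
        ((∏ i, cf (p i)) * (∑ i, h i * mon (fun i => (p i).1) (pt i)) *
          (∑ i, u i * mon (fun i => (p i).2.1) (ps i))) •
          (fun s : S => mon (fun i => (p i).2.2) (ps s)) := by
      ext s
      have e1 : M u s = ∑ i, ∑ j : S, h i * u j * (if pt i + ps j + ps s = 0 then 1 else 0) := by
        have : ∀ i, ∀ j : S, (pt i + ps j + ps s = 0 ↔ i = s.1 ∧ j = s) := by
          intro i j
          constructor
          · intro hh
            obtain ⟨a, b⟩ := hpt _ _ _ hh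
            exact ⟨a.trans b, Subtype.ext b⟩
          · rintro ⟨rfl, rfl⟩
            exact h3 _
        simp_rw [this]
        rw [Finset.sum_eq_single s.1]
        · rw [Finset.sum_eq_single s]
          · simp [M, mul_comm]
          · intro b _ hb; simp [hb]
          · simp
        · intro b _ hb; simp [hb]
        · simp
      rw [e1]
      simp_rw [expand]
      simp only [Finset.sum_apply, Pi.smul_apply, smul_eq_mul, Finset.mul_sum, Finset.sum_mul]
      rw [Finset.sum_comm]
      rw [Finset.sum_congr rfl fun j _ => Finset.sum_comm]
      rw [Finset.sum_comm]
      refine Finset.sum_congr rfl fun p _ => Finset.sum_congr rfl fun j _ =>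
        Finset.sum_congr rfl fun i _ => by ring
    rw [key]
    refine Submodule.sum_mem _ fun p _ => ?_
    by_cases hp : (∏ i, cf (p i)) = 0
    · simp [hp]
    rcases low_cases p hp with h1 | h1 | h1
    · rw [hV' _ h1]; simp
    · rw [hu' _ h1]; simp
    · refine Submodule.smul_mem _ _ (Submodule.subset_span ?_)
      simp only [coe_image, Set.mem_image, mem_coe]
      exact ⟨_, h1, rfl⟩
  have e1 := Submodule.finrank_mono hle
  have e2 : Module.finrank (ZMod 3) (U.map M) = Module.finrank (ZMod 3) U :=
    (Submodule.equivMapOfInjective M hM U).finrank_eq.symm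
  have : Module.finrank (ZMod 3) U = Module.finrank (ZMod 3) (LinearMap.ker (tmap ps)) := rfl
  omega

theorem low_card (m : ℕ) (s : ℝ) (h0 : 0 < s) (h1 : s ≤ 1) :
    ((low m).card : ℝ) * s ^ (2 * m) ≤ (1 + s ^ 3 + s ^ 6) ^ m := by
  have e : (1 + s ^ 3 + s ^ 6) ^ m = ∑ e : Fin m → Fin 3, ∏ i, s ^ (3 * (e i : ℕ)) := by
    have := Finset.prod_univ_sum (fun _ : Fin m => (univ : Finset (Fin 3)))
      (fun _ j => s ^ (3 * (j : ℕ)))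
    simp only [Fintype.piFinset_univ] at this
    rw [← this]
    simp [Fin.sum_univ_three]
  rw [e, ← nsmul_eq_mul, ← Finset.sum_const]
  refine (Finset.sum_le_sum fun e he => ?_).trans
    (Finset.sum_le_univ_sum_of_nonneg fun e => Finset.prod_nonneg fun i _ => by positivity)
  rw [Finset.prod_pow_eq_pow_sum, ← Finset.mul_sum]
  exact pow_le_pow_of_le_one h0.le h1 (by simpa [low] using he)

theorem removal {m : ℕ} (B : Finset (Fin m → ZMod 3)) :
    B.card ≤ 3 * (low m).card + (univ.filter fun q : (Fin m → ZMod 3) × (Fin m → ZMod 3) =>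
      q.2 ≠ 0 ∧ q.1 ∈ B ∧ q.1 + q.2 ∈ B ∧ q.1 + q.2 + q.2 ∈ B).card := by
  classical
  set Q := (univ.filter fun q : (Fin m → ZMod 3) × (Fin m → ZMod 3) =>
      q.2 ≠ 0 ∧ q.1 ∈ B ∧ q.1 + q.2 ∈ B ∧ q.1 + q.2 + q.2 ∈ B) with hQ
  have h3 : ∀ x : Fin m → ZMod 3, x + x + x = 0 := fun x => by
    ext k; simp only [Pi.add_apply, Pi.zero_apply]; generalize x k = x; revert x; decide
  have key : ∀ x ∈ B \ Q.image Prod.fst, ∀ y ∈ B \ Q.image Prod.fst,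
      ∀ z ∈ B \ Q.image Prod.fst, x + y + z = 0 → x = y := by
    intro x hx y hy z hz hxyz
    by_contra hne
    rw [mem_sdiff] at hx hy hz
    refine hx.2 (mem_image.2 ⟨(x, y - x), ?_, rfl⟩)
    have hzz : x + (y - x) + (y - x) = z := by
      have a := h3 y
      have : x + (y - x) + (y - x) - z = (y + y + y) - (x + y + z) := by abel
      rw [a, hxyz, sub_zero] at this
      exact sub_eq_zero.1 this
    simp only [hQ, mem_filter, mem_univ, true_and]
    refine ⟨sub_ne_zero.2 (Ne.symm hne), hx.1, ?_, ?_⟩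
    · simpa using hy.1
    · rw [hzz]; exact hz.1
  have hc := cap_bound (fun i : {x // x ∈ B \ Q.image Prod.fst} => i.1) (by
    intro i j k h
    refine ⟨Subtype.ext (key _ i.2 _ j.2 _ k.2 h), Subtype.ext (key _ j.2 _ k.2 _ i.2 ?_)⟩
    rw [← h]; abel)
  rw [Fintype.card_coe] at hc
  have h1 : B.card ≤ (B \ Q.image Prod.fst).card + (Q.image Prod.fst).card := by
    have := Finset.le_card_sdiff (Q.image Prod.fst) B
    omega
  have h2 : (Q.image Prod.fst).card ≤ Q.card := Finset.card_image_le
  omega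

theorem sampling {I K : Type*} [Fintype I] [Field K] [Fintype K] [DecidableEq K] {m : ℕ}
    (A : I → Finset K) (f : (Fin m → ZMod 3) →+ K) (hf : Function.Injective f)
    (hA : ∀ y d : K, d ≠ 0 → (univ.filter fun a => y ∈ A a ∧ y + d ∈ A a ∧ y + d + d ∈ A a).card ≤ 1) :
    3 ^ m * ∑ a, (A a).card ≤ Fintype.card I * Fintype.card K * (3 * (low m).card)
      + 9 ^ m * (Fintype.card K + Fintype.card I) := by
  classical
  have hX : Fintype.card (Fin m → ZMod 3) = 3 ^ m := by simp
  have hKpos : 0 < Fintype.card K := Fintype.card_pos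
  refine le_of_mul_le_mul_right ?_ hKpos
  -- left side
  have hL : (3 ^ m * ∑ a, (A a).card) * Fintype.card K =
      ∑ a, ∑ t : K, ∑ v : K, (univ.filter fun x : Fin m → ZMod 3 => v + t * f x ∈ A a).card := by
    have : ∀ a, ∀ t : K, ∑ v : K, (univ.filter fun x : Fin m → ZMod 3 => v + t * f x ∈ A a).card
        = 3 ^ m * (A a).card := by
      intro a t
      simp only [Finset.card_filter]
      rw [Finset.sum_comm]
      have : ∀ x : Fin m → ZMod 3, ∑ v : K, (if v + t * f x ∈ A a then 1 else 0) = (A a).card := by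
        intro x
        refine (Equiv.sum_comp (Equiv.addRight (t * f x)) (fun v => if v ∈ A a then 1 else 0)).trans ?_
        simp
      simp only [this, Finset.sum_const, Finset.card_univ, hX, smul_eq_mul]
    simp only [this, Finset.sum_const, Finset.card_univ, smul_eq_mul]
    rw [← Finset.mul_sum, ← Finset.mul_sum]
    ring
  -- removal
  have hrem : ∀ a, ∀ t v : K, (univ.filter fun x : Fin m → ZMod 3 => v + t * f x ∈ A a).card ≤
      3 * (low m).card + ∑ q : (Fin m → ZMod 3) × (Fin m → ZMod 3),
        if q.2 ≠ 0 ∧ v + t * f q.1 ∈ A a ∧ v + t * f q.1 + t * f q.2 ∈ A a ∧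
          v + t * f q.1 + t * f q.2 + t * f q.2 ∈ A a then 1 else 0 := by
    intro a t v
    have := removal (univ.filter fun x : Fin m → ZMod 3 => v + t * f x ∈ A a)
    simpa only [mem_filter, mem_univ, true_and, map_add, mul_add, ← add_assoc,
      Finset.card_filter (p := fun q : (Fin m → ZMod 3) × (Fin m → ZMod 3) => _)] using this
  have hAc : ∑ a, (A a).card ≤ Fintype.card I * Fintype.card K := by
    calc ∑ a, (A a).card ≤ ∑ a : I, Fintype.card K := Finset.sum_le_sum fun a _ => Finset.card_le_univ _
      _ = _ := by simp
  have hcount : ∀ q : (Fin m → ZMod 3) × (Fin m → ZMod 3),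
      (∑ a, ∑ t : K, ∑ v : K,
        if q.2 ≠ 0 ∧ v + t * f q.1 ∈ A a ∧ v + t * f q.1 + t * f q.2 ∈ A a ∧
          v + t * f q.1 + t * f q.2 + t * f q.2 ∈ A a then 1 else 0) ≤
      Fintype.card K * Fintype.card K + Fintype.card I * Fintype.card K := by
    intro q
    by_cases hq : q.2 = 0
    · simp [hq]
    have hfq : f q.2 ≠ 0 := fun h => hq (hf (by rw [h, map_zero]))
    simp only [ne_eq, hq, not_false_eq_true, true_and]
    have e1 : ∀ a, (∑ t : K, ∑ v : K,
        if v + t * f q.1 ∈ A a ∧ v + t * f q.1 + t * f q.2 ∈ A a ∧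
          v + t * f q.1 + t * f q.2 + t * f q.2 ∈ A a then 1 else 0) =
        ∑ d : K, ∑ v : K, if v ∈ A a ∧ v + d ∈ A a ∧ v + d + d ∈ A a then 1 else 0 := by
      intro a
      refine Eq.trans ?_ (Equiv.sum_comp (Equiv.mulRight₀ (f q.2) hfq) (fun d => ∑ v : K,
        if v ∈ A a ∧ v + d ∈ A a ∧ v + d + d ∈ A a then 1 else 0))
      refine Finset.sum_congr rfl fun t _ => ?_
      exact Equiv.sum_comp (Equiv.addRight (t * f q.1)) (fun v =>
        if v ∈ A a ∧ v + t * f q.2 ∈ A a ∧ v + t * f q.2 + t * f q.2 ∈ A a then 1 else 0)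
    simp only [e1]
    rw [Finset.sum_comm]
    have e2 : ∀ d : K, (∑ a, ∑ v : K, if v ∈ A a ∧ v + d ∈ A a ∧ v + d + d ∈ A a then 1 else 0) ≤
        Fintype.card K + if d = 0 then Fintype.card I * Fintype.card K else 0 := by
      intro d
      by_cases hd : d = 0
      · subst hd
        simpa using Nat.le_add_left_of_le hAc
      · rw [Finset.sum_comm]
        simp only [hd, if_false, add_zero]
        calc _ ≤ ∑ v : K, 1 := Finset.sum_le_sum fun v _ => by
              have := hA v d hd
              rwa [Finset.card_filter] at this
          _ = _ := by simp
    refine (Finset.sum_le_sum fun d _ => e2 d).trans ?_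
    simp [Finset.sum_add_distrib]
  rw [hL]
  calc _ ≤ ∑ a : I, ∑ t : K, ∑ v : K, (3 * (low m).card + ∑ q : (Fin m → ZMod 3) × (Fin m → ZMod 3),
        if q.2 ≠ 0 ∧ v + t * f q.1 ∈ A a ∧ v + t * f q.1 + t * f q.2 ∈ A a ∧
          v + t * f q.1 + t * f q.2 + t * f q.2 ∈ A a then 1 else 0) :=
        Finset.sum_le_sum fun a _ => Finset.sum_le_sum fun t _ => Finset.sum_le_sum fun v _ =>
          hrem a t v
    _ = Fintype.card I * (Fintype.card K * (Fintype.card K * (3 * (low m).card))) +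
        ∑ q : (Fin m → ZMod 3) × (Fin m → ZMod 3), ∑ a, ∑ t : K, ∑ v : K,
        if q.2 ≠ 0 ∧ v + t * f q.1 ∈ A a ∧ v + t * f q.1 + t * f q.2 ∈ A a ∧
          v + t * f q.1 + t * f q.2 + t * f q.2 ∈ A a then 1 else 0 := by
        simp only [Finset.sum_add_distrib, Finset.sum_const, Finset.card_univ, smul_eq_mul]
        congr 1
        rw [Finset.sum_comm]
        rw [Finset.sum_comm (s := (univ : Finset ((Fin m → ZMod 3) × (Fin m → ZMod 3))))]
        rw [Finset.sum_comm]
        refine Finset.sum_congr rfl fun a _ => ?_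
        rw [Finset.sum_comm (s := (univ : Finset ((Fin m → ZMod 3) × (Fin m → ZMod 3))))]
        refine Finset.sum_congr rfl fun t _ => ?_
        rw [Finset.sum_comm]
    _ ≤ Fintype.card I * (Fintype.card K * (Fintype.card K * (3 * (low m).card))) +
        ∑ q : (Fin m → ZMod 3) × (Fin m → ZMod 3),
          (Fintype.card K * Fintype.card K + Fintype.card I * Fintype.card K) :=
        Nat.add_le_add_left (Finset.sum_le_sum fun q _ => hcount q) _
    _ = _ := by
        simp only [Finset.sum_const, Finset.card_univ, Fintype.card_prod, hX, smul_eq_mul]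
        rw [← mul_pow]
        ring

theorem ap_core {V W : Type*} [AddCommGroup V] [AddCommGroup W] [Module (ZMod 2) V]
    [Module (ZMod 3) W] (A : Set (V × W)) (hA : ¬ IsDistinctAP 6 A) (a b : V) (y d : W)
    (hd : d ≠ 0) (ha : (a, y) ∈ A ∧ (a, y + d) ∈ A ∧ (a, y + d + d) ∈ A)
    (hb : (b, y) ∈ A ∧ (b, y + d) ∈ A ∧ (b, y + d + d) ∈ A) : a = b := by
  by_contra hab
  have hba : b - a ≠ 0 := sub_ne_zero.2 (Ne.symm hab)
  have t2 : ∀ (i : ℕ) (v : V), i • v = (i : ZMod 2) • v := fun i v => (Nat.cast_smul_eq_nsmul _ i v).symm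
  have t3 : ∀ (i : ℕ) (v : W), i • v = (i : ZMod 3) • v := fun i v => (Nat.cast_smul_eq_nsmul _ i v).symm
  have c0 : ((2 : ℕ) : ZMod 2) = 0 := rfl
  have h20 : ∀ v : V, (2 : ℕ) • v = 0 := fun v => by rw [t2]; rw [c0, zero_smul]
  have c3 : ((3 : ℕ) : ZMod 3) = 0 := rfl
  have h30 : ∀ v : W, (3 : ℕ) • v = 0 := fun v => by rw [t3]; rw [c3, zero_smul]
  have e2 := h20 (b - a)
  have e3 := h30 d
  refine hA ⟨(a, y), (b - a, d), ?_, ?_⟩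
  · intro i
    have w0 : ((a, y) : V × W) + (i : ℕ) • ((b - a, d) : V × W) =
      (a + (i : ℕ) • (b - a), y + (i : ℕ) • d) := rfl
    rw [w0]
    have r2 : (i : ℕ) • (b - a) = ((i : ℕ) % 2) • (b - a) := by
      conv_lhs => rw [← Nat.div_add_mod (i : ℕ) 2, add_smul, mul_comm, mul_smul, e2, smul_zero, zero_add]
    have r3 : (i : ℕ) • d = ((i : ℕ) % 3) • d := by
      conv_lhs => rw [← Nat.div_add_mod (i : ℕ) 3, add_smul, mul_comm, mul_smul, e3, smul_zero, zero_add]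
    rw [r2, r3]
    have x0 : y + 2 • d = y + d + d := by rw [two_smul, add_assoc]
    clear r2 r3 w0 t2 t3 h20 h30
    obtain ⟨a1, a2, a3⟩ := ha
    obtain ⟨b1, b2, b3⟩ := hb
    fin_cases i <;> simp [*]
  · intro i j hij
    have p1 : (i : ℕ) • (b - a) = (j : ℕ) • (b - a) :=
      add_left_cancel (congrArg Prod.fst hij : a + (i : ℕ) • (b - a) = a + (j : ℕ) • (b - a))
    have p2 : (i : ℕ) • d = (j : ℕ) • d :=
      add_left_cancel (congrArg Prod.snd hij : y + (i : ℕ) • d = y + (j : ℕ) • d)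
    rw [t2, t2] at p1
    rw [t3, t3] at p2
    have q1 := (ZMod.natCast_eq_natCast_iff' _ _ _).1 (smul_left_injective _ hba p1)
    have q2 := (ZMod.natCast_eq_natCast_iff' _ _ _).1 (smul_left_injective _ hd p2)
    ext
    omega

theorem isAP_equiv {G H : Type*} [AddCommGroup G] [AddCommGroup H] (e : G ≃+ H) (k : ℕ) (A : Set H)
    (h : IsDistinctAP k (e ⁻¹' A)) : IsDistinctAP k A := by
  obtain ⟨a, d, h1, h2⟩ := h
  refine ⟨e a, e d, fun i => ?_, fun i j hij => h2 (e.injective ?_)⟩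
  · simpa using h1 i
  · simpa using hij

theorem main_count (n m : ℕ) (hn : n ≠ 0) (hmn : m ≤ n) (A : Finset (Fin n → ZMod 6))
    (hA : ¬ IsDistinctAP 6 (A : Set (Fin n → ZMod 6))) :
    3 ^ m * A.card ≤ 6 ^ n * (3 * (low m).card) + 9 ^ m * (3 ^ n + 2 ^ n) := by
  classical
  let K := GaloisField 3 n
  have hfr : Module.finrank (ZMod 3) K = n := GaloisField.finrank 3 hn
  have : Fintype K := Fintype.ofFinite K
  have hKc : Fintype.card K = 3 ^ n := by
    rw [← Nat.card_eq_fintype_card]; exact GaloisField.card 3 n hn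
  let g : (Fin n → ZMod 3) ≃ₗ[ZMod 3] K :=
    LinearEquiv.ofFinrankEq _ _ (by simp [hfr])
  obtain ⟨f, hf⟩ : ∃ f : (Fin m → ZMod 3) →+ K, Function.Injective f := by
    let f0 : (Fin m → ZMod 3) →+ (Fin n → ZMod 3) :=
      { toFun := fun x i => if h : i.1 < m then x ⟨i.1, h⟩ else 0
        map_zero' := by ext i; simp
        map_add' := fun x y => by
          ext i
          by_cases h : i.1 < m <;> simp [h] }
    refine ⟨g.toAddEquiv.toAddMonoidHom.comp f0, fun x y hxy => ?_⟩
    have h0 : f0 x = f0 y := g.injective hxy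
    ext i
    have := congrFun h0 ⟨i.1, i.2.trans_le hmn⟩
    simpa [f0] using this
  let c : ZMod 6 ≃+* ZMod 2 × ZMod 3 := ZMod.chineseRemainder (m := 2) (n := 3) (by norm_num)
  let e1 : (Fin n → ZMod 6) ≃+ (Fin n → ZMod 2) × (Fin n → ZMod 3) :=
    { toFun := fun x => (fun i => (c (x i)).1, fun i => (c (x i)).2)
      invFun := fun p i => c.symm (p.1 i, p.2 i)
      left_inv := fun x => by ext i; simp
      right_inv := fun p => by ext i <;> simp
      map_add' := fun x y => by ext i <;> simp }
  let e : (Fin n → ZMod 2) × K ≃+ (Fin n → ZMod 6) :=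
    (AddEquiv.prodCongr (AddEquiv.refl _) g.symm.toAddEquiv).trans e1.symm
  have hA' : ¬ IsDistinctAP 6 (e ⁻¹' (A : Set (Fin n → ZMod 6))) := fun h => hA (isAP_equiv e 6 _ h)
  let B : (Fin n → ZMod 2) → Finset K := fun a => univ.filter fun y => e (a, y) ∈ A
  have hs := sampling B f hf (by
    intro y d hd
    rw [Finset.card_le_one]
    intro a ha b hb
    simp only [B, mem_filter, mem_univ, true_and] at ha hb
    exact ap_core _ hA' a b y d hd ha hb)
  have hcard : ∑ a, (B a).card = A.card := by
    simp only [B, Finset.card_filter]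
    rw [← Fintype.sum_prod_type (f := fun p : (Fin n → ZMod 2) × K => if e p ∈ A then 1 else 0)]
    refine (Equiv.sum_comp e.toEquiv (fun x => if x ∈ A then 1 else 0)).trans ?_
    simp
  rw [hcard, hKc] at hs
  have h2 : Fintype.card (Fin n → ZMod 2) = 2 ^ n := by simp
  rw [h2, ← mul_pow] at hs
  exact hs

theorem numeric (q r : ℕ) (hr : r < 41) (S : ℕ)
    (h : 3 ^ (24 * q) * S ≤ 6 ^ (41 * q + r) * (3 * (low (24 * q)).card)
      + 9 ^ (24 * q) * (3 ^ (41 * q + r) + 2 ^ (41 * q + r))) :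
    (S : ℝ) ≤ 5 * 6 ^ 41 * (5.7089 ^ 41) ^ q := by
  have hlow := low_card (24 * q) (21 / 25) (by norm_num) (by norm_num)
  have hl : ((low (24 * q)).card : ℝ) ≤ ((2755106 / 1000000 : ℝ) ^ 24) ^ q := by
    have hp : (0 : ℝ) < (21 / 25) ^ (2 * (24 * q)) := by positivity
    refine le_of_mul_le_mul_right (hlow.trans ?_) hp
    rw [pow_mul (21 / 25 : ℝ) 2, ← pow_mul, ← mul_pow]
    exact pow_le_pow_left₀ (by norm_num) (by norm_num) _
  have h' : (3 : ℝ) ^ (24 * q) * S ≤ 6 ^ (41 * q + r) * (3 * (low (24 * q)).card)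
      + 9 ^ (24 * q) * (3 ^ (41 * q + r) + 2 ^ (41 * q + r)) := by exact_mod_cast h
  have h6 : (6 : ℝ) ^ r ≤ 6 ^ 41 := pow_le_pow_right₀ (by norm_num) hr.le
  have h3 : (3 : ℝ) ^ r ≤ 6 ^ r := pow_le_pow_left₀ (by norm_num) (by norm_num) _
  have h23 : (2 : ℝ) ^ (41 * q + r) ≤ 3 ^ (41 * q + r) := pow_le_pow_left₀ (by norm_num) (by norm_num) _
  have hp : (0 : ℝ) < 3 ^ (24 * q) := by positivity
  refine le_of_mul_le_mul_left (h'.trans ?_) hp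
  have k1 : ((6 : ℝ) ^ 41) ^ q * ((2755106 / 1000000 : ℝ) ^ 24) ^ q ≤ (3 ^ 24) ^ q * (5.7089 ^ 41) ^ q := by
    rw [← mul_pow, ← mul_pow]
    exact pow_le_pow_left₀ (by positivity) (by norm_num) _
  have k2 : ((9 : ℝ) ^ 24) ^ q * ((3 : ℝ) ^ 41) ^ q ≤ (3 ^ 24) ^ q * (5.7089 ^ 41) ^ q := by
    rw [← mul_pow, ← mul_pow]
    exact pow_le_pow_left₀ (by positivity) (by norm_num) _
  have s1 : (6 : ℝ) ^ (41 * q + r) * (3 * (low (24 * q)).card) ≤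
      3 * 6 ^ 41 * ((3 ^ 24) ^ q * (5.7089 ^ 41) ^ q) := by
    calc (6 : ℝ) ^ (41 * q + r) * (3 * (low (24 * q)).card)
        = 3 * 6 ^ r * ((6 ^ 41) ^ q * (low (24 * q)).card) := by
          rw [pow_add, pow_mul]; ring
      _ ≤ 3 * 6 ^ 41 * ((6 ^ 41) ^ q * ((2755106 / 1000000 : ℝ) ^ 24) ^ q) := by gcongr
      _ ≤ _ := by gcongr
  have s2 : (9 : ℝ) ^ (24 * q) * (3 ^ (41 * q + r) + 2 ^ (41 * q + r)) ≤
      2 * 6 ^ 41 * ((3 ^ 24) ^ q * (5.7089 ^ 41) ^ q) := by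
    calc (9 : ℝ) ^ (24 * q) * (3 ^ (41 * q + r) + 2 ^ (41 * q + r))
        ≤ (9 : ℝ) ^ (24 * q) * (3 ^ (41 * q + r) + 3 ^ (41 * q + r)) := by gcongr
      _ = 2 * 3 ^ r * ((9 ^ 24) ^ q * (3 ^ 41) ^ q) := by
          rw [pow_add, pow_mul, pow_mul]; ring
      _ ≤ 2 * 6 ^ 41 * ((9 ^ 24) ^ q * (3 ^ 41) ^ q) := by
          have := h3.trans h6
          gcongr
      _ ≤ _ := by gcongr
  rw [pow_mul (3 : ℝ) 24 q]
  refine (add_le_add s1 s2).trans (le_of_eq (by ring))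

theorem r6_exp_small : ∃ N : ℕ, ∀ n : ℕ, N ≤ n → (rAP 6 6 n : ℝ) ≤ 5.709 ^ n := by
  obtain ⟨Q, hQ⟩ : ∃ Q : ℕ, ∀ q ≥ Q, (5 * 6 ^ 41 : ℝ) * (5.7089 ^ 41) ^ q ≤ (5.709 ^ 41) ^ q := by
    have ht := tendsto_pow_atTop_nhds_zero_of_lt_one (r := (5.7089 ^ 41 / 5.709 ^ 41 : ℝ))
      (by positivity) (by norm_num)
    have := (ht.eventually_lt_const (u := 1 / (5 * 6 ^ 41 : ℝ)) (by positivity))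
    obtain ⟨Q, hQ⟩ := Filter.eventually_atTop.1 this
    refine ⟨Q, fun q hq => ?_⟩
    have := (hQ q hq).le
    rw [div_pow, div_le_div_iff₀ (by positivity) (by positivity), one_mul] at this
    linarith
  refine ⟨41 * Q + 1, fun n hn => ?_⟩
  have hmem : rAP 6 6 n ∈ {s : ℕ | ∃ A : Finset (Fin n → ZMod 6),
      ¬ IsDistinctAP 6 (A : Set (Fin n → ZMod 6)) ∧ A.card = s} := by
    refine Nat.sSup_mem ⟨0, ∅, ?_, rfl⟩ ⟨Fintype.card (Fin n → ZMod 6), ?_⟩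
    · rintro ⟨a, d, h, -⟩
      simpa using h 0
    · rintro s ⟨A, -, rfl⟩
      exact Finset.card_le_univ _
  obtain ⟨A, hA, hs⟩ := hmem
  rw [← hs]
  have hdm : 41 * (n / 41) + n % 41 = n := Nat.div_add_mod n 41
  have hmod : n % 41 < 41 := Nat.mod_lt _ (by norm_num)
  have h1 := main_count n (24 * (n / 41)) (by omega) (by omega) A hA
  have h2 := numeric (n / 41) (n % 41) hmod A.card (by rw [hdm]; exact h1)
  refine h2.trans ((hQ _ (by omega)).trans ?_)
  rw [← pow_mul]
  exact pow_le_pow_right₀ (by norm_num) (by omega)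
end

section
/- For every n ≥ 1, 2^n · r_3(ℤ_3^n) ≤ r_6(ℤ_6^n); i.e., there exists a subset of (ℤ/6ℤ)^n of size 2^n·r_3(ℤ_3^n) containing no 6-term arithmetic progression of pairwise distinct elements. -/
lemma zmod3_aux : ∀ x : ZMod 3, x ≠ 0 → ∀ a : ZMod 3, ∀ i j : Fin 3,
    a + (i : ℕ) • x = a + (j : ℕ) • x → i = j := by decide

lemma rAP_bdd (k m n : ℕ) [NeZero m] : BddAbove {s : ℕ | ∃ A : Finset (Fin n → ZMod m),
    ¬ IsDistinctAP k (A : Set (Fin n → ZMod m)) ∧ A.card = s} := by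
  refine ⟨Fintype.card (Fin n → ZMod m), ?_⟩
  rintro s ⟨A, -, rfl⟩
  exact Finset.card_le_univ A

theorem r6_lower (n : ℕ) (hn : 1 ≤ n) : 2 ^ n * rAP 3 3 n ≤ rAP 6 6 n := by
  have hmem : rAP 3 3 n ∈ {s : ℕ | ∃ A : Finset (Fin n → ZMod 3),
      ¬ IsDistinctAP 3 (A : Set (Fin n → ZMod 3)) ∧ A.card = s} := by
    apply Nat.sSup_mem _ (rAP_bdd 3 3 n)
    refine ⟨0, ∅, ?_, rfl⟩
    rintro ⟨a, d, h, -⟩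
    simpa using h 0
  obtain ⟨A, hA, hc⟩ := hmem
  rw [← hc]
  let e : ZMod 6 ≃+* ZMod 2 × ZMod 3 := ZMod.chineseRemainder (m := 2) (n := 3) (by decide)
  let f : (Fin n → ZMod 2) × (Fin n → ZMod 3) → (Fin n → ZMod 6) :=
    fun p i => e.symm (p.1 i, p.2 i)
  have hf : Function.Injective f := by
    rintro ⟨x, y⟩ ⟨x', y'⟩ h
    have h' : ∀ i, x i = x' i ∧ y i = y' i := fun i => by
      have := e.symm.injective (congrFun h i)
      simpa using this
    exact Prod.ext (funext fun i => (h' i).1) (funext fun i => (h' i).2)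
  let B : Finset (Fin n → ZMod 6) := ((Finset.univ : Finset (Fin n → ZMod 2)) ×ˢ A).image f
  have hB : B.card = 2 ^ n * A.card := by
    rw [Finset.card_image_of_injective _ hf, Finset.card_product]
    simp [ZMod.card]
  let π : (Fin n → ZMod 6) → (Fin n → ZMod 3) := fun v i => (e (v i)).2
  have hπ : ∀ v ∈ B, π v ∈ A := by
    intro v hv
    obtain ⟨⟨x, y⟩, hp, rfl⟩ := Finset.mem_image.1 hv
    have : π (f (x, y)) = y := by
      funext i
      simp [π, f]
    rw [this]
    exact (Finset.mem_product.1 hp).2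
  have hlin : ∀ (a d : Fin n → ZMod 6) (k : ℕ), π (a + k • d) = π a + k • π d := by
    intro a d k
    funext i
    simp [π]
  refine le_csSup (rAP_bdd 6 6 n) ⟨B, ?_, hB⟩
  rintro ⟨a, d, hm, hinj⟩
  apply hA
  refine ⟨π a, π d, fun i => ?_, ?_⟩
  · have := hπ _ (hm (Fin.castLE (by norm_num) i))
    rw [hlin] at this
    simpa using this
  · have hd : π d ≠ 0 := by
      intro h0
      have h2 : (2 : ℕ) • d = 0 := by
        funext i
        apply e.injective
        have hi : (e (d i)).2 = 0 := congrFun h0 i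
        have h22 : ∀ x : ZMod 2, (2 : ℕ) • x = 0 := by decide
        rw [Pi.smul_apply, map_nsmul, Pi.zero_apply, map_zero]
        refine Prod.ext (h22 _) ?_
        rw [Prod.smul_snd, hi]
        simp
      have : (2 : Fin 6) = 0 := hinj (by
        change a + (2 : ℕ) • d = a + (0 : ℕ) • d
        rw [h2, zero_smul])
      exact absurd this (by decide)
    obtain ⟨t, ht⟩ := Function.ne_iff.1 hd
    intro i j hij
    exact zmod3_aux (π d t) ht (π a t) i j (congrFun hij t)
end

section
/- There exists N such that for all n ≥ N, 4.434^n ≤ 2^n · r_3(ℤ_3^n); i.e., for all sufficiently large n there is a subset of (ℤ/3ℤ)^n of size at least 4.434^n / 2^n containing no 3-term arithmetic progression of pairwise distinct elements. -/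
namespace CapProof

/-- Ternary tries. -/
inductive Tr : Type
  | o : Tr
  | l : Tr
  | n : Tr → Tr → Tr → Tr

def pick (a b c : Tr) (p : Fin 3) : Tr :=
  Nat.casesOn p.val a fun k => Nat.casesOn k b fun _ => c

def Tr.sub (T : Tr) (p : Fin 3) : Tr :=
  Tr.casesOn T .o .o fun a b c => pick a b c p

def Tr.isO : Tr → Bool
  | .o => true
  | _ => false

def Tr.isL : Tr → Bool
  | .l => true
  | _ => false

/-- Membership of a word in a trie. -/
def mem : (n : ℕ) → Tr → (Fin n → Fin 3) → Bool
  | 0, T, _ => T.isL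
  | n + 1, T, w => mem n (T.sub (w 0)) (Fin.tail w)

def wt (c : Fin 3 → ℕ) : ℕ → Tr → ℕ
  | 0, T => bif T.isL then 1 else 0
  | n + 1, T => bif T.isO then 0 else
      c 0 * wt c n (T.sub 0) + c 1 * wt c n (T.sub 1) + c 2 * wt c n (T.sub 2)

def allP (f : Fin 3 × Fin 3 × Fin 3 → Bool) (L : List (Fin 3 × Fin 3 × Fin 3)) : Bool :=
  List.rec true (fun t _ r => Bool.casesOn (f t) false r) L

lemma allP_sound (f : Fin 3 × Fin 3 × Fin 3 → Bool) (L : List (Fin 3 × Fin 3 × Fin 3))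
    (h : allP f L = true) : ∀ t ∈ L, f t = true := by
  induction L with
  | nil => simp
  | cons a L ih =>
    have h' : Bool.casesOn (motive := fun _ => Bool) (f a) false (allP f L) = true := h
    cases hf : f a with
    | false => rw [hf] at h'; simp at h'
    | true =>
      rw [hf] at h'
      intro t ht
      rcases List.mem_cons.1 ht with rfl | ht
      · exact hf
      · exact ih h' t ht

def chk (pats : List (Fin 3 × Fin 3 × Fin 3)) (n : ℕ) : Bool → Tr → Tr → Tr → Bool :=
  Nat.rec (fun e A B C => e || !(A.isL && B.isL && C.isL))
    (fun _ ih e A B C =>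
      Tr.casesOn A true true fun a0 a1 a2 => Tr.casesOn B true true fun b0 b1 b2 =>
        Tr.casesOn C true true fun c0 c1 c2 =>
          allP (fun t => ih (e && (t.1 == t.2.1 && t.2.1 == t.2.2))
            (pick a0 a1 a2 t.1) (pick b0 b1 b2 t.2.1) (pick c0 c1 c2 t.2.2)) pats) n

lemma mem_isO (n : ℕ) (T : Tr) (w : Fin n → Fin 3) (h : T.isO = true) : mem n T w = false := by
  cases T with
  | o =>
    clear h
    induction n with
    | zero => rfl
    | succ n ih => exact ih _
  | l => simp [Tr.isO] at h
  | n a b c => simp [Tr.isO] at h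

lemma mem_node (n : ℕ) (T : Tr) (w : Fin (n + 1) → Fin 3) (h : mem (n + 1) T w = true) :
    ∃ a b c, T = .n a b c := by
  cases T with
  | o => rw [mem_isO _ _ _ rfl] at h; simp at h
  | l =>
    rw [mem, mem_isO n _ _ rfl] at h
    simp at h
  | n a b c => exact ⟨a, b, c, rfl⟩

lemma chk_sound (pats : List (Fin 3 × Fin 3 × Fin 3)) (n : ℕ) : ∀ (e : Bool) (A B C : Tr),
    chk pats n e A B C = true → ∀ a b c : Fin n → Fin 3,
    mem n A a = true → mem n B b = true → mem n C c = true →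
    (∀ i, (a i, b i, c i) ∈ pats) → e = true ∧ a = b ∧ b = c := by
  induction n with
  | zero =>
    intro e A B C h a b c ha hb hc _
    simp only [mem] at ha hb hc
    have h' : (e || !(A.isL && B.isL && C.isL)) = true := h
    simp only [ha, hb, hc] at h'
    refine ⟨by simpa using h', Subsingleton.elim _ _, Subsingleton.elim _ _⟩
  | succ n ih =>
    intro e A B C h a b c ha hb hc hp
    obtain ⟨a0, a1, a2, rfl⟩ := mem_node _ _ _ ha
    obtain ⟨b0, b1, b2, rfl⟩ := mem_node _ _ _ hb
    obtain ⟨c0, c1, c2, rfl⟩ := mem_node _ _ _ hc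
    have h1 := allP_sound _ _ h _ (hp 0)
    obtain ⟨h2, h3, h4⟩ := ih _ _ _ _ h1 _ _ _ ha hb hc (fun i => hp i.succ)
    simp only [Bool.and_eq_true, beq_iff_eq] at h2
    refine ⟨h2.1, ?_, ?_⟩
    · rw [← Fin.cons_self_tail a, ← Fin.cons_self_tail b, h3, h2.2.1]
    · rw [← Fin.cons_self_tail b, ← Fin.cons_self_tail c, h4, h2.2.2]

/-- The set of words in a trie. -/
def ws (n : ℕ) (T : Tr) : Finset (Fin n → Fin 3) := Finset.univ.filter fun w => mem n T w = true

lemma mem_ws {n : ℕ} {T : Tr} {w : Fin n → Fin 3} : w ∈ ws n T ↔ mem n T w = true := by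
  simp [ws]

lemma wt_eq (c : Fin 3 → ℕ) (n : ℕ) : ∀ T : Tr, ∑ w ∈ ws n T, ∏ i, c (w i) = wt c n T := by
  induction n with
  | zero =>
    intro T
    cases h : T.isL <;> simp [ws, mem, wt, h]
  | succ n ih =>
    intro T
    have key : ∑ w ∈ ws (n + 1) T, ∏ i, c (w i) =
        c 0 * wt c n (T.sub 0) + c 1 * wt c n (T.sub 1) + c 2 * wt c n (T.sub 2) := by
      simp only [ws, Finset.sum_filter]
      rw [← (Fin.consEquiv (fun _ : Fin (n + 1) => Fin 3)).sum_comp, Fintype.sum_prod_type]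
      rw [Fin.sum_univ_three]
      simp only [← ih, ws, Finset.sum_filter, Finset.mul_sum]
      simp [Fin.consEquiv, mem, Fin.prod_univ_succ]
    cases h : T.isO with
    | false => rw [key]; simp [wt, h]
    | true =>
      have : ws (n + 1) T = ∅ := by
        ext w
        simp [mem_ws, mem_isO _ _ w h]
      simp [this, wt, h]

def okP : List (Fin 3 × Fin 3 × Fin 3) :=
  [(0,0,0), (1,1,1), (2,2,2), (1,1,2), (1,2,1), (2,1,1), (2,2,1), (2,1,2), (1,2,2),
   (0,1,1), (1,0,1), (1,1,0), (0,2,2), (2,0,2), (2,2,0)]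

def zsP : List (Fin 3 × Fin 3 × Fin 3) :=
  [(0,0,0), (1,1,1), (2,2,2), (0,1,2), (0,2,1), (1,0,2), (1,2,0), (2,0,1), (2,1,0)]

/-- Extendable collections. -/
def Ext {G : Type*} [AddCommGroup G] (C : Fin 3 → Finset G) : Prop :=
  ∀ j k l, ∀ x ∈ C j, ∀ y ∈ C k, ∀ z ∈ C l, x + y + z = 0 →
    (j, k, l) ∈ okP ∧ (j = k → k = l → x = y ∧ y = z)

/-- Admissible collections of words. -/
def Adm (pats : List (Fin 3 × Fin 3 × Fin 3)) {n : ℕ} (W : Fin 3 → Finset (Fin n → Fin 3)) : Prop :=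
  ∀ j k l, ∀ x ∈ W j, ∀ y ∈ W k, ∀ z ∈ W l, (∀ i, (x i, y i, z i) ∈ pats) →
    (j, k, l) ∈ okP ∧ (j = k → k = l → x = y ∧ y = z)

def chkAll (pats : List (Fin 3 × Fin 3 × Fin 3)) (n : ℕ) (T0 T1 T2 : Tr) : Bool :=
  chk pats n true T0 T0 T0 && chk pats n true T1 T1 T1 && chk pats n true T2 T2 T2 &&
  chk pats n false T0 T0 T1 && chk pats n false T0 T1 T0 && chk pats n false T1 T0 T0 &&
  chk pats n false T0 T0 T2 && chk pats n false T0 T2 T0 && chk pats n false T2 T0 T0 &&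
  chk pats n false T0 T1 T2 && chk pats n false T0 T2 T1 && chk pats n false T1 T0 T2 &&
  chk pats n false T1 T2 T0 && chk pats n false T2 T0 T1 && chk pats n false T2 T1 T0

lemma adm_of_chkAll (pats : List (Fin 3 × Fin 3 × Fin 3)) (n : ℕ) (T0 T1 T2 : Tr)
    (h : chkAll pats n T0 T1 T2 = true) :
    Adm pats (fun j => ws n (![T0, T1, T2] j)) := by
  simp only [chkAll, Bool.and_eq_true] at h
  obtain ⟨⟨⟨⟨⟨⟨⟨⟨⟨⟨⟨⟨⟨⟨h1, h2⟩, h3⟩, h4⟩, h5⟩, h6⟩, h7⟩, h8⟩, h9⟩, h10⟩, h11⟩, h12⟩, h13⟩, h14⟩, h15⟩ := h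
  intro j k l x hx y hy z hz hp
  rw [mem_ws] at hx hy hz
  have S1 := chk_sound _ _ _ _ _ _ h1 x y z
  have S2 := chk_sound _ _ _ _ _ _ h2 x y z
  have S3 := chk_sound _ _ _ _ _ _ h3 x y z
  have S4 := chk_sound _ _ _ _ _ _ h4 x y z
  have S5 := chk_sound _ _ _ _ _ _ h5 x y z
  have S6 := chk_sound _ _ _ _ _ _ h6 x y z
  have S7 := chk_sound _ _ _ _ _ _ h7 x y z
  have S8 := chk_sound _ _ _ _ _ _ h8 x y z
  have S9 := chk_sound _ _ _ _ _ _ h9 x y z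
  have S10 := chk_sound _ _ _ _ _ _ h10 x y z
  have S11 := chk_sound _ _ _ _ _ _ h11 x y z
  have S12 := chk_sound _ _ _ _ _ _ h12 x y z
  have S13 := chk_sound _ _ _ _ _ _ h13 x y z
  have S14 := chk_sound _ _ _ _ _ _ h14 x y z
  have S15 := chk_sound _ _ _ _ _ _ h15 x y z
  clear h1 h2 h3 h4 h5 h6 h7 h8 h9 h10 h11 h12 h13 h14 h15
  have e0 : (![T0, T1, T2] : Fin 3 → Tr) 0 = T0 := rfl
  have e1 : (![T0, T1, T2] : Fin 3 → Tr) 1 = T1 := rfl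
  have e2 : (![T0, T1, T2] : Fin 3 → Tr) 2 = T2 := rfl
  by_cases hm : (j, k, l) ∈ okP
  · refine ⟨hm, ?_⟩
    rintro rfl rfl
    clear S4 S5 S6 S7 S8 S9 S10 S11 S12 S13 S14 S15
    fin_cases j
    · exact (S1 hx hy hz hp).2
    · exact (S2 hx hy hz hp).2
    · exact (S3 hx hy hz hp).2
  · exfalso
    clear S1 S2 S3
    have hf : ∀ p : Prop, ¬ (false = true ∧ p) := by simp
    fin_cases j <;> fin_cases k <;> fin_cases l <;>
      first
      | exact hm (by decide)
      | exact hf _ (S4 hx hy hz hp)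
      | exact hf _ (S5 hx hy hz hp)
      | exact hf _ (S6 hx hy hz hp)
      | exact hf _ (S7 hx hy hz hp)
      | exact hf _ (S8 hx hy hz hp)
      | exact hf _ (S9 hx hy hz hp)
      | exact hf _ (S10 hx hy hz hp)
      | exact hf _ (S11 hx hy hz hp)
      | exact hf _ (S12 hx hy hz hp)
      | exact hf _ (S13 hx hy hz hp)
      | exact hf _ (S14 hx hy hz hp)
      | exact hf _ (S15 hx hy hz hp)

open Classical in
/-- The product construction. -/
noncomputable def lift {G : Type*} {n : ℕ} (C : Fin 3 → Finset G)
    (W : Fin 3 → Finset (Fin n → Fin 3)) (j : Fin 3) : Finset (Fin n → G) :=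
  (W j).biUnion fun w => Fintype.piFinset fun i => C (w i)

lemma ext_lift {G : Type*} [AddCommGroup G] {n : ℕ} {C : Fin 3 → Finset G}
    {W : Fin 3 → Finset (Fin n → Fin 3)} (hC : Ext C) (hW : Adm okP W) : Ext (lift C W) := by
  intro j k l x hx y hy z hz h
  simp only [lift, Finset.mem_biUnion, Fintype.mem_piFinset] at hx hy hz
  obtain ⟨a, ha, hx⟩ := hx
  obtain ⟨b, hb, hy⟩ := hy
  obtain ⟨c, hc, hz⟩ := hz
  have key := fun i => hC _ _ _ _ (hx i) _ (hy i) _ (hz i) (congrFun h i)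
  obtain ⟨h1, h2⟩ := hW j k l a ha b hb c hc (fun i => (key i).1)
  refine ⟨h1, fun hj hk => ?_⟩
  obtain ⟨rfl, rfl⟩ := h2 hj hk
  exact ⟨funext fun i => ((key i).2 rfl rfl).1, funext fun i => ((key i).2 rfl rfl).2⟩

lemma card_lift {G : Type*} [AddCommGroup G] (h3 : ∀ x : G, x + x + x = 0) {n : ℕ}
    {C : Fin 3 → Finset G} {W : Fin 3 → Finset (Fin n → Fin 3)} (hC : Ext C) (hW : Adm okP W)
    (j : Fin 3) : (lift C W j).card = ∑ w ∈ W j, ∏ i, (C (w i)).card := by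
  classical
  unfold lift
  rw [Finset.card_biUnion]
  · simp
  · intro a ha b hb hab
    rw [Function.onFun, Finset.disjoint_left]
    intro x hx hy
    rw [Fintype.mem_piFinset] at hx hy
    exact hab ((hW j j j a ha a ha b hb
      (fun i => (hC _ _ _ _ (hx i) _ (hx i) _ (hy i) (h3 _)).1)).2 rfl rfl).2

section
open Tr

def TS : Tr :=
  (n (n (n (n (n o (n o o (n o (n o (n o o l) o) o)) o) (n (n o o (n o (n o (n o o l) o) o)) o
  (n (n o (n o (n o o l) o) o) (n (n o (n o o l) o) o o) o)) (n o (n o o (n o (n (n o l o) (n l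
  o o) o) o)) o)) (n (n (n o o (n o (n o (n o o l) o) o)) o o) o (n (n o o (n o (n (n o o l) o
  (n l o o)) o)) o o)) (n (n o (n (n o o (n o (n o l o) o)) (n o o (n (n o l o) o o)) (n (n o
  (n o l o) o) (n o (n l o o) o) o)) o) (n (n (n o o (n o (n o l o) o)) o (n (n o (n o l o) o)
  o o)) o (n (n o (n o o (n l o o)) o) (n (n o o (n l o o)) o (n (n l o o) o o)) o)) (n o (n (n
  (n o o (n o l o)) o (n (n o l o) o o)) o (n (n (n o l o) o o) o o)) o))) (n (n (n (n o o (n o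
  (n o (n o o l) o) o)) o (n o o (n o (n (n o o l) o o) o))) (n o o (n (n o (n (n o o l) o o)
  o) (n (n (n o o l) o o) o o) o)) (n (n o o (n o (n (n o o l) o o) o)) o o)) o (n o (n (n (n
  (n o o (n o l o)) o o) o (n (n (n o l o) o o) (n (n l o o) o o) o)) o (n (n (n (n o l o) (n l
  o o) o) (n (n l o o) o o) o) (n (n (n l o o) o o) o o) o)) o)) (n (n (n o o (n (n o (n o o (n
  o o l)) o) (n (n o o (n o o l)) o (n o o (n l o o))) o)) o (n (n (n o (n o o (n o o l)) o) (n
  (n o o (n o o l)) o (n o o (n l o o))) o) (n (n (n o o (n o l o)) (n o o (n l o o)) o) (n (n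
  o o (n l o o)) o o) (n o (n (n l o o) o o) o)) o)) (n (n o o (n (n (n o (n o o l) o) (n (n o
  o l) o o) o) (n (n (n o o l) o o) o (n (n l o o) o o)) o)) o (n (n (n o (n o o (n l o o)) o)
  (n (n o o (n l o o)) o o) o) o o)) (n (n (n (n o o (n o (n o o l) o)) (n o o (n (n o l o) (n
  l o o) o)) (n (n o (n o o l) o) o o)) (n (n o o (n o (n l o o) o)) o (n (n o (n l o o) o) o
  o)) o) o (n (n (n o o (n (n o l o) o o)) o o) o o)))) (n (n (n (n o o (n o (n o o (n o o (n l
  o o))) o)) (n o o (n (n (n o (n o o l) o) o o) o o)) (n o (n (n o o (n o (n l o o) o)) o (n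
  (n o (n l o o) o) o o)) o)) (n (n o o (n (n o (n o o (n l o o)) o) (n (n o o (n l o o)) o o)
  o)) o (n (n (n (n o (n o o l) o) (n (n o o l) o (n l o o)) o) (n (n (n o o l) o (n l o o)) o
  (n (n l o o) o o)) o) (n (n (n (n o o l) o (n l o o)) o (n (n l o o) o o)) o (n (n (n l o o)
  o o) o o)) o)) (n (n (n o (n o o (n (n o l o) (n l o o) o)) o) o (n (n (n o (n o o l) o) (n
  (n o o l) o o) o) (n (n (n o o l) o o) o (n (n l o o) o o)) o)) o o)) (n (n (n (n (n o (n o o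
  (n o l o)) o) (n (n o o (n o l o)) o (n (n o l o) (n l o o) o)) o) (n (n (n o o (n o l o)) o
  (n (n o l o) (n l o o) o)) o (n (n (n o l o) (n l o o) o) (n (n l o o) o o) o)) o) (n (n (n
  (n o o (n o l o)) o (n (n o l o) (n l o o) o)) o (n (n (n o l o) (n l o o) o) (n (n l o o) o
  o) o)) o (n (n (n (n o l o) (n l o o) o) (n (n l o o) o o) o) (n (n (n l o o) o o) o o) o))
  o) (n (n (n (n (n o (n o o l) o) (n (n o o l) o (n l o o)) o) (n (n (n o o l) o (n l o o)) o
  (n (n l o o) o o)) o) (n (n (n (n o o l) o (n l o o)) o (n (n l o o) o o)) o (n (n (n l o o)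
  o o) o o)) o) (n (n (n (n (n o l o) (n l o o) o) (n (n l o o) o o) o) (n (n (n l o o) o o) o
  o) o) (n (n (n (n l o o) o o) o o) o o) o) o) o) o) (n (n (n (n (n o o (n o (n o (n o o l) o)
  o)) o (n (n o (n o o (n o o l)) o) (n (n o o (n o o l)) o o) (n o (n (n o o l) o o) o))) (n o
  o (n (n o (n (n o o l) o o) o) (n (n (n o o l) o o) o o) o)) (n (n (n o (n o o (n o l o)) o)
  (n (n o o (n o l o)) o o) (n o (n (n o o l) o (n l o o)) o)) (n o o (n o (n (n l o o) o o)
  o)) o)) o (n (n (n (n o o (n o (n o o l) o)) o (n (n o (n o o l) o) o o)) o o) o o)) o o))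

def TA0 : Tr :=
  (n (n (n (n (n (n o l l) (n l o o) (n l o o)) (n (n l o o) o o) (n (n l o o) o o)) (n (n (n l
  o o) o o) o o) (n (n (n l o o) o o) o o)) (n (n (n (n l o o) o o) o o) o o) (n (n (n (n l o
  o) o o) o o) o o)) (n (n (n (n (n l o o) o o) o o) o o) o o) (n (n (n (n (n l o o) o o) o o)
  o o) o o))

def TA1 : Tr :=
  (n (n (n o (n o (n (n o l l) (n l o o) (n l o o)) (n (n o l l) (n l o o) (n l o o))) (n o (n
  (n o l l) (n l o o) (n l o o)) (n (n o l l) (n l o o) (n l o o)))) (n (n (n o (n o l l) (n o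
  l l)) (n o (n l o o) (n l o o)) (n o (n l o o) (n l o o))) (n (n (n o l l) o o) o o) (n (n (n
  o l l) o o) o o)) (n (n (n o (n o l l) (n o l l)) (n o (n l o o) (n l o o)) (n o (n l o o) (n
  l o o))) (n (n (n o l l) o o) o o) (n (n (n o l l) o o) o o))) (n (n (n (n o (n o l l) (n o l
  l)) (n (n o l l) o o) (n (n o l l) o o)) (n (n o (n l o o) (n l o o)) o o) (n (n o (n l o o)
  (n l o o)) o o)) (n (n o (n (n l o o) o o) (n (n l o o) o o)) (n (n (n l o o) o o) (n o (n o
  l o) (n o o l)) (n o (n o o l) (n o l o))) (n (n (n l o o) o o) (n o (n o o l) (n o l o)) (n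
  o (n o l o) (n o o l)))) (n (n o (n (n l o o) o o) (n (n l o o) o o)) (n (n (n l o o) o o) (n
  o (n o o l) (n o l o)) (n o (n o l o) (n o o l))) (n (n (n l o o) o o) (n o (n o l o) (n o o
  l)) (n o (n o o l) (n o l o))))) (n (n (n (n o (n o l l) (n o l l)) (n (n o l l) o o) (n (n o
  l l) o o)) (n (n o (n l o o) (n l o o)) o o) (n (n o (n l o o) (n l o o)) o o)) (n (n o (n (n
  l o o) o o) (n (n l o o) o o)) (n (n (n l o o) o o) (n o (n o o l) (n o l o)) (n o (n o l o)
  (n o o l))) (n (n (n l o o) o o) (n o (n o l o) (n o o l)) (n o (n o o l) (n o l o)))) (n (n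
  o (n (n l o o) o o) (n (n l o o) o o)) (n (n (n l o o) o o) (n o (n o l o) (n o o l)) (n o (n
  o o l) (n o l o))) (n (n (n l o o) o o) (n o (n o o l) (n o l o)) (n o (n o l o) (n o o
  l))))))

def TA2 : Tr :=
  (n (n (n (n o (n o (n o l l) (n o l l)) (n o (n o l l) (n o l l))) (n (n o (n o l l) (n o l
  l)) o o) (n (n o (n o l l) (n o l l)) o o)) (n (n o (n (n o l l) o o) (n (n o l l) o o)) (n
  (n o (n l o o) (n l o o)) (n (n l o o) o o) (n (n l o o) o o)) (n (n o (n l o o) (n l o o))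
  (n (n l o o) o o) (n (n l o o) o o))) (n (n o (n (n o l l) o o) (n (n o l l) o o)) (n (n o (n
  l o o) (n l o o)) (n (n l o o) o o) (n (n l o o) o o)) (n (n o (n l o o) (n l o o)) (n (n l o
  o) o o) (n (n l o o) o o)))) (n (n (n o (n o (n l o o) (n l o o)) (n o (n l o o) (n l o o)))
  (n (n (n o l l) o o) (n (n l o o) o o) (n (n l o o) o o)) (n (n (n o l l) o o) (n (n l o o) o
  o) (n (n l o o) o o))) (n (n (n (n o l l) (n l o o) (n l o o)) o o) (n o (n o (n o l o) (n o
  o l)) (n o (n o o l) (n o l o))) (n o (n o (n o o l) (n o l o)) (n o (n o l o) (n o o l))))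
  (n (n (n (n o l l) (n l o o) (n l o o)) o o) (n o (n o (n o o l) (n o l o)) (n o (n o l o) (n
  o o l))) (n o (n o (n o l o) (n o o l)) (n o (n o o l) (n o l o))))) (n (n (n o (n o (n l o
  o) (n l o o)) (n o (n l o o) (n l o o))) (n (n (n o l l) o o) (n (n l o o) o o) (n (n l o o)
  o o)) (n (n (n o l l) o o) (n (n l o o) o o) (n (n l o o) o o))) (n (n (n (n o l l) (n l o o)
  (n l o o)) o o) (n o (n o (n o o l) (n o l o)) (n o (n o l o) (n o o l))) (n o (n o (n o l o)
  (n o o l)) (n o (n o o l) (n o l o)))) (n (n (n (n o l l) (n l o o) (n l o o)) o o) (n o (n o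
  (n o l o) (n o o l)) (n o (n o o l) (n o l o))) (n o (n o (n o o l) (n o l o)) (n o (n o l o)
  (n o o l))))))

def TU0 : Tr :=
  (n (n o o (n o o (n o o (n o o (n o o (n o o (n o o l))))))) (n (n o o (n o o (n o o (n o o
  (n o o (n o o l)))))) (n (n o o (n o o (n o o (n o o (n o o l))))) (n (n o o (n o o (n o o (n
  o o l)))) (n (n o o (n o o (n o o l))) (n (n o o (n o o l)) (n (n o o l) (n l o o) o) o) o)
  o) o) o) o)

def TU1 : Tr :=
  (n o (n o (n o (n o (n o (n o (n o (n o l o) o) o) o) o) o) o) o)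

def TU2 : Tr :=
  (n o o (n o o (n o o (n o o (n o o (n o o (n o o (n o o l))))))))


end

def CA : Fin 3 → Finset (Fin 6 → ZMod 3) := fun j => ws 6 (![TA0, TA1, TA2] j)
def WU : Fin 3 → Finset (Fin 8 → Fin 3) := fun j => ws 8 (![TU0, TU1, TU2] j)
def WS : Fin 3 → Finset (Fin 9 → Fin 3) := fun j => ws 9 (![TS, .o, .o] j)

set_option maxRecDepth 100000 in
lemma admA : Adm zsP CA := adm_of_chkAll _ _ _ _ _ (by decide +kernel)
set_option maxRecDepth 100000 in
lemma admU : Adm okP WU := adm_of_chkAll _ _ _ _ _ (by decide +kernel)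
set_option maxRecDepth 100000 in
lemma admS : Adm okP WS := adm_of_chkAll _ _ _ _ _ (by decide +kernel)

lemma zs3 : ∀ x y z : ZMod 3, x + y + z = 0 → ((x, y, z) : Fin 3 × Fin 3 × Fin 3) ∈ zsP := by
  decide

lemma extA : Ext CA := fun j k l x hx y hy z hz h =>
  admA j k l x hx y hy z hz fun i => zs3 _ _ _ (congrFun h i)

lemma cardA (j : Fin 3) : (CA j).card = ![12, 112, 112] j := by
  have h : (CA j).card = wt (fun _ => 1) 6 (![TA0, TA1, TA2] j) := by
    rw [← wt_eq]
    simp only [Finset.prod_const_one, Finset.sum_const, smul_eq_mul, mul_one]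
    rfl
  rw [h]
  fin_cases j <;> decide +kernel

noncomputable def CU : Fin 3 → Finset (Fin 8 → Fin 6 → ZMod 3) := lift CA WU
lemma extU : Ext CU := ext_lift extA admU

lemma z3 : ∀ x : ZMod 3, x + x + x = 0 := by decide

lemma cardU (j : Fin 3) : (CU j).card = ![96 * 112 ^ 7, 112 ^ 8, 112 ^ 8] j := by
  have h : (CU j).card = wt ![12, 112, 112] 8 (![TU0, TU1, TU2] j) := by
    rw [← wt_eq]
    unfold CU
    refine (card_lift (fun x => funext fun i => z3 _) extA admU j).trans ?_
    exact Finset.sum_congr rfl fun w _ => Finset.prod_congr rfl fun i _ => cardA _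
  rw [h]
  fin_cases j <;> decide +kernel

noncomputable def D : Finset (Fin 9 → Fin 8 → Fin 6 → ZMod 3) := lift CU WS 0

lemma cap_of_ext {G : Type*} [AddCommGroup G] {C : Fin 3 → Finset G} (hE : Ext C) :
    ∀ x ∈ C 0, ∀ y ∈ C 0, ∀ z ∈ C 0, x + y + z = 0 → x = y ∧ y = z :=
  fun x hx y hy z hz h => (hE 0 0 0 x hx y hy z hz h).2 rfl rfl

lemma capD : ∀ x ∈ D, ∀ y ∈ D, ∀ z ∈ D, x + y + z = 0 → x = y ∧ y = z := by
  unfold D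
  exact cap_of_ext (ext_lift extU admS)

lemma cardD : D.card = 126 * 96 ^ 4 * 112 ^ 68 := by
  have h : D.card = wt ![96 * 112 ^ 7, 112 ^ 8, 112 ^ 8] 9 TS := by
    rw [← wt_eq]
    unfold D
    refine (card_lift (fun x => funext fun i => funext fun k => z3 _) extU admS 0).trans ?_
    exact Finset.sum_congr rfl fun w _ => Finset.prod_congr rfl fun i _ => cardU _
  rw [h]
  decide +kernel

lemma cap_le {n : ℕ} (A : Finset (Fin n → ZMod 3))
    (hA : ∀ x ∈ A, ∀ y ∈ A, ∀ z ∈ A, x + y + z = 0 → x = y ∧ y = z) : A.card ≤ rAP 3 3 n := by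
  apply le_csSup
  · refine ⟨Fintype.card (Fin n → ZMod 3), ?_⟩
    rintro s ⟨B, _, rfl⟩
    exact Finset.card_le_univ B
  · refine ⟨A, ?_, rfl⟩
    rintro ⟨a, d, h, hinj⟩
    have h0 := h 0
    have h1 := h 1
    have h2 := h 2
    have hs : (a + ((0 : Fin 3) : ℕ) • d) + (a + ((1 : Fin 3) : ℕ) • d)
        + (a + ((2 : Fin 3) : ℕ) • d) = 0 := by
      have e : (a + ((0 : Fin 3) : ℕ) • d) + (a + ((1 : Fin 3) : ℕ) • d)
        + (a + ((2 : Fin 3) : ℕ) • d) = (a + a + a) + (d + d + d) := by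
        simp only [Fin.val_zero, Fin.val_one, Fin.val_two]
        module
      rw [e]
      funext i
      simp [z3]
    have := (hA _ h0 _ h1 _ h2 hs).1
    have := @hinj 0 1 this
    simp at this

lemma pow_le (D : Finset (Fin 9 → Fin 8 → Fin 6 → ZMod 3))
    (capD : ∀ x ∈ D, ∀ y ∈ D, ∀ z ∈ D, x + y + z = 0 → x = y ∧ y = z) (n q : ℕ) (h : 432 * q ≤ n) : D.card ^ q ≤ rAP 3 3 n := by
  obtain ⟨e⟩ : Nonempty ((Fin q × Fin 9 × Fin 8 × Fin 6) ↪ Fin n) := by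
    apply Function.Embedding.nonempty_of_card_le
    simp
    omega
  let f : (Fin q → Fin 9 → Fin 8 → Fin 6 → ZMod 3) → (Fin n → ZMod 3) := fun x =>
    Function.extend e (fun p => x p.1 p.2.1 p.2.2.1 p.2.2.2) 0
  have hf : ∀ x a b c d, f x (e (a, b, c, d)) = x a b c d := fun x a b c d =>
    e.injective.extend_apply _ _ _
  have hinj : Function.Injective f := by
    intro x y hxy
    funext a b c d
    rw [← hf x, hxy, hf]
  have := cap_le ((Fintype.piFinset fun _ : Fin q => D).image f) ?_
  · rw [Finset.card_image_of_injective _ hinj] at this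
    simpa using this
  · intro x hx y hy z hz hs
    rw [Finset.mem_image] at hx hy hz
    obtain ⟨x, hx, rfl⟩ := hx
    obtain ⟨y, hy, rfl⟩ := hy
    obtain ⟨z, hz, rfl⟩ := hz
    rw [Fintype.mem_piFinset] at hx hy hz
    have key : ∀ a, x a = y a ∧ y a = z a := by
      intro a
      apply capD _ (hx a) _ (hy a) _ (hz a)
      funext b c d
      have := congrFun hs (e (a, b, c, d))
      simpa [hf] using this
    rw [funext fun a => (key a).1, funext fun a => (key a).2]
    exact ⟨rfl, rfl⟩

set_option exponentiation.threshold 1000 in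
lemma num : (1.01 : ℝ) * (2.217 : ℝ) ^ 432 ≤ 126 * 96 ^ 4 * 112 ^ 68 := by
  norm_num

end CapProof

theorem r3_lower : ∃ N : ℕ, ∀ n : ℕ, N ≤ n →
    (4.434 : ℝ) ^ n ≤ 2 ^ n * rAP 3 3 n := by
  obtain ⟨Q, hQ⟩ := pow_unbounded_of_one_lt ((2.217 : ℝ) ^ 432) (by norm_num : (1 : ℝ) < 1.01)
  refine ⟨432 * Q, fun n hn => ?_⟩
  have e : (4.434 : ℝ) ^ n = 2 ^ n * 2.217 ^ n := by
    rw [← mul_pow]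
    norm_num
  rw [e]
  apply mul_le_mul_of_nonneg_left _ (by positivity)
  set q := n / 432 with hq
  have h1 : 432 * q ≤ n := by omega
  have h2 : n ≤ 432 * q + 432 := by omega
  have h3 : Q ≤ q := by omega
  have h4 := CapProof.pow_le _ CapProof.capD n q h1
  rw [CapProof.cardD] at h4
  have h5 : ((126 * 96 ^ 4 * 112 ^ 68 : ℝ)) ^ q ≤ (rAP 3 3 n : ℝ) := by exact_mod_cast h4
  refine le_trans ?_ h5
  calc (2.217 : ℝ) ^ n ≤ 2.217 ^ (432 * q + 432) := pow_le_pow_right₀ (by norm_num) h2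
    _ = (2.217 ^ 432) ^ q * 2.217 ^ 432 := by rw [pow_add, pow_mul]
    _ ≤ (2.217 ^ 432) ^ q * 1.01 ^ q := by
      apply mul_le_mul_of_nonneg_left _ (by positivity)
      exact hQ.le.trans (pow_le_pow_right₀ (by norm_num) h3)
    _ = (1.01 * 2.217 ^ 432) ^ q := by rw [← mul_pow, mul_comm]
    _ ≤ _ := pow_le_pow_left₀ (by positivity) CapProof.num q
end

section
/- For every n ≥ 1, the maximum of the total size ∑_{r ∈ (ℤ/2ℤ)^n} |A(r)| over all families of subsets A(r) ⊆ (ℤ/3ℤ)^n indexed by r ∈ (ℤ/2ℤ)^n satisfying property (*)_6 equals r_6(ℤ_6^n). -/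
lemma distinctAP_equiv {G H : Type*} [AddCommGroup G] [AddCommGroup H] (e : G ≃+ H) (k : ℕ)
    (B : Set H) : IsDistinctAP k (e ⁻¹' B) ↔ IsDistinctAP k B := by
  constructor
  · rintro ⟨a, d, h1, h2⟩
    refine ⟨e a, e d, fun i => ?_, fun i j h => ?_⟩
    · have := h1 i
      simpa using this
    · apply h2
      apply e.injective
      simpa using h
  · rintro ⟨a, d, h1, h2⟩
    refine ⟨e.symm a, e.symm d, fun i => ?_, fun i j h => ?_⟩
    · have := h1 i
      simpa using this
    · apply h2
      apply e.symm.injective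
      simpa using h

lemma distinctAP_prod {G H : Type*} [AddCommGroup G] [AddCommGroup H]
    (hG : ∀ g : G, 2 • g = 0) (hH : ∀ h : H, 3 • h = 0) (B : Set (G × H)) :
    IsDistinctAP 6 B ↔ ∃ r' r'' : G, r' ≠ r'' ∧
      IsDistinctAP 3 {x : H | (r', x) ∈ B ∧ (r'', x) ∈ B} := by
  have ordG : ∀ g : G, g ≠ 0 → addOrderOf g = 2 := fun g hg =>
    haveI : Fact (Nat.Prime 2) := ⟨Nat.prime_two⟩
    addOrderOf_eq_prime (hG g) hg
  have ordH : ∀ g : H, g ≠ 0 → addOrderOf g = 3 := fun g hg =>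
    haveI : Fact (Nat.Prime 3) := ⟨Nat.prime_three⟩
    addOrderOf_eq_prime (hH g) hg
  have redG : ∀ (g : G) (i j : ℕ), i % 2 = j % 2 → i • g = j • g := fun g i j h =>
    nsmul_eq_nsmul_iff_modEq.2
      (Nat.ModEq.of_dvd (addOrderOf_dvd_of_nsmul_eq_zero (hG g)) h)
  have redH : ∀ (g : H) (i j : ℕ), i % 3 = j % 3 → i • g = j • g := fun g i j h =>
    nsmul_eq_nsmul_iff_modEq.2
      (Nat.ModEq.of_dvd (addOrderOf_dvd_of_nsmul_eq_zero (hH g)) h)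
  constructor
  · rintro ⟨⟨a, b⟩, ⟨d, f⟩, h1, h2⟩
    have hd : d ≠ 0 := by
      rintro rfl
      have := @h2 0 3 (by simp [hH])
      exact absurd this (by decide)
    have hf : f ≠ 0 := by
      rintro rfl
      have := @h2 0 2 (by simp [hG])
      exact absurd this (by decide)
    refine ⟨a, a + d, by simpa using hd, b, f, fun i => ⟨?_, ?_⟩, fun i j h => ?_⟩
    · have := h1 ⟨(4 * i) % 6, Nat.mod_lt _ (by norm_num)⟩
      have e1 := redG d ((4 * i) % 6) 0 (by omega)
      have e2 := redH f ((4 * i) % 6) i (by omega)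
      simpa [e1, e2] using this
    · have := h1 ⟨(4 * i + 3) % 6, Nat.mod_lt _ (by norm_num)⟩
      have e1 := redG d ((4 * i + 3) % 6) 1 (by omega)
      have e2 := redH f ((4 * i + 3) % 6) i (by omega)
      simpa [e1, e2] using this
    · have h' : (i : ℕ) • f = (j : ℕ) • f := add_left_cancel h
      rw [nsmul_eq_nsmul_iff_modEq, ordH f hf] at h'
      unfold Nat.ModEq at h'
      omega
  · rintro ⟨r, s, hrs, b, f, h1, h2⟩
    have hf : f ≠ 0 := by
      rintro rfl
      have := @h2 0 1 (by simp)
      exact absurd this (by decide)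
    have hd : s - r ≠ 0 := sub_ne_zero.2 hrs.symm
    refine ⟨(r, b), (s - r, f), fun i => ?_, fun i j h => ?_⟩
    · have := h1 ⟨i % 3, Nat.mod_lt _ (by norm_num)⟩
      have e2 := redH f (i % 3) i (by omega)
      simp only [e2, Set.mem_ofPred_eq] at this
      rcases Nat.mod_two_eq_zero_or_one i with hi | hi
      · have e1 := redG (s - r) i 0 (by omega)
        simpa [e1] using this.1
      · have e1 := redG (s - r) i 1 (by omega)
        simpa [e1] using this.2
    · have h' : (i : ℕ) • (s - r, f) = (j : ℕ) • (s - r, f) := add_left_cancel h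
      have h3 := congrArg Prod.fst h'
      have h4 := congrArg Prod.snd h'
      simp only [Prod.smul_mk] at h3 h4
      rw [nsmul_eq_nsmul_iff_modEq, ordG _ hd] at h3
      rw [nsmul_eq_nsmul_iff_modEq, ordH f hf] at h4
      unfold Nat.ModEq at h3 h4
      omega

lemma exists_crt (n : ℕ) :
    Nonempty ((Fin n → ZMod 6) ≃+ (Fin n → ZMod 2) × (Fin n → ZMod 3)) := by
  have e : ZMod 6 ≃+ ZMod 2 × ZMod 3 :=
    (ZMod.chineseRemainder (m := 2) (n := 3) (by decide)).toAddEquiv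
  exact ⟨{ toFun := fun x => (fun i => (e (x i)).1, fun i => (e (x i)).2)
           invFun := fun p i => e.symm (p.1 i, p.2 i)
           left_inv := fun x => by simp
           right_inv := fun p => by simp
           map_add' := fun x y => by ext i <;> simp }⟩

lemma card_slices {X G H : Type*} [Fintype X] [Fintype G] [Fintype H] [DecidableEq X]
    (e : X ≃ G × H) (A : Finset X) :
    A.card = ∑ r : G, (Finset.univ.filter fun x : H => e.symm (r, x) ∈ A).card := by
  simp only [Finset.card_filter]
  rw [← Fintype.sum_prod_type' (f := fun r x => if e.symm (r, x) ∈ A then 1 else 0),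
    ← e.sum_comp]
  simp

theorem subset_reformulation_star6 (n : ℕ) (hn : 1 ≤ n) :
    IsGreatest {S : ℕ | ∃ A : (Fin n → ZMod 2) → Finset (Fin n → ZMod 3),
      (∀ r' r'' : Fin n → ZMod 2, r' ≠ r'' →
        ¬ IsDistinctAP 3 ((A r' ∩ A r'' : Finset (Fin n → ZMod 3)) : Set (Fin n → ZMod 3))) ∧
      S = ∑ r : Fin n → ZMod 2, (A r).card}
    (rAP 6 6 n) := by
  obtain ⟨e⟩ := exists_crt n
  have hG : ∀ g : Fin n → ZMod 2, 2 • g = 0 := fun g => by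
    ext i
    have : ∀ z : ZMod 2, 2 • z = 0 := by decide
    exact this _
  have hH : ∀ g : Fin n → ZMod 3, 3 • g = 0 := fun g => by
    ext i
    have : ∀ z : ZMod 3, 3 • z = 0 := by decide
    exact this _
  have key : ∀ (A : Finset (Fin n → ZMod 6)) (F : (Fin n → ZMod 2) → Finset (Fin n → ZMod 3)),
      (∀ r x, x ∈ F r ↔ e.symm (r, x) ∈ A) →
      ((¬ IsDistinctAP 6 (A : Set (Fin n → ZMod 6))) ↔ ∀ r' r'' : Fin n → ZMod 2, r' ≠ r'' →
        ¬ IsDistinctAP 3 ((F r' ∩ F r'' : Finset (Fin n → ZMod 3)) : Set (Fin n → ZMod 3))) ∧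
      A.card = ∑ r, (F r).card := by
    intro A F hF
    constructor
    · rw [← distinctAP_equiv e.symm, distinctAP_prod hG hH]
      have : ∀ r s, ((F r ∩ F s : Finset (Fin n → ZMod 3)) : Set (Fin n → ZMod 3)) =
          {x | (r, x) ∈ e.symm ⁻¹' (A : Set (Fin n → ZMod 6)) ∧
            (s, x) ∈ e.symm ⁻¹' (A : Set (Fin n → ZMod 6))} := by
        intro r s
        ext x
        simp [hF]
      simp only [this]
      push Not
      rfl
    · rw [card_slices e.toEquiv A]
      refine Finset.sum_congr rfl fun r _ => congrArg _ ?_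
      ext x
      rw [hF]
      exact ⟨fun h => (Finset.mem_filter.1 h).2, fun h => Finset.mem_filter.2 ⟨Finset.mem_univ _, h⟩⟩
  have hset : {S : ℕ | ∃ A : (Fin n → ZMod 2) → Finset (Fin n → ZMod 3),
      (∀ r' r'' : Fin n → ZMod 2, r' ≠ r'' →
        ¬ IsDistinctAP 3 ((A r' ∩ A r'' : Finset (Fin n → ZMod 3)) : Set (Fin n → ZMod 3))) ∧
      S = ∑ r : Fin n → ZMod 2, (A r).card} = {s : ℕ | ∃ A : Finset (Fin n → ZMod 6),
    ¬ IsDistinctAP 6 (A : Set (Fin n → ZMod 6)) ∧ A.card = s} := by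
    ext S
    constructor
    · rintro ⟨F, h1, rfl⟩
      have := key (Finset.univ.filter fun y => (e y).2 ∈ F (e y).1) F (by simp)
      exact ⟨_, this.1.2 h1, this.2⟩
    · rintro ⟨A, h1, rfl⟩
      have := key A (fun r => Finset.univ.filter fun x => e.symm (r, x) ∈ A) (by simp)
      exact ⟨_, this.1.1 h1, this.2⟩
  rw [hset]
  have hb : BddAbove {s : ℕ | ∃ A : Finset (Fin n → ZMod 6),
    ¬ IsDistinctAP 6 (A : Set (Fin n → ZMod 6)) ∧ A.card = s} := by
    refine ⟨Fintype.card (Fin n → ZMod 6), ?_⟩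
    rintro _ ⟨A, -, rfl⟩
    exact Finset.card_le_univ A
  refine ⟨Nat.sSup_mem ⟨0, ∅, ?_, rfl⟩ hb, fun s hs => le_csSup hb hs⟩
  rintro ⟨a, d, h, -⟩
  simpa using h 0
end

section
/- If m = 4M + 2 for some nonnegative integer M (i.e., m ≡ 2 (mod 4)), then for every n ≥ 1, r_3(ℤ_m^n) = 2^n · r_3(ℤ_{m/2}^n). -/
lemma rAP_le_aux {m n : ℕ} [NeZero m] {A : Finset (Fin n → ZMod m)}
    (hA : ¬ IsDistinctAP 3 (A : Set (Fin n → ZMod m))) : A.card ≤ rAP 3 m n := by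
  apply le_csSup
  · refine ⟨Fintype.card (Fin n → ZMod m), ?_⟩
    rintro s ⟨B, -, rfl⟩
    exact Finset.card_le_univ B
  · exact ⟨A, hA, rfl⟩

lemma rAP_mem_aux (m n : ℕ) [NeZero m] : ∃ A : Finset (Fin n → ZMod m),
    ¬ IsDistinctAP 3 (A : Set (Fin n → ZMod m)) ∧ A.card = rAP 3 m n := by
  apply Nat.sSup_mem (s := {s : ℕ | ∃ A : Finset (Fin n → ZMod m),
    ¬ IsDistinctAP 3 (A : Set (Fin n → ZMod m)) ∧ A.card = s})
  · refine ⟨0, ∅, ?_, rfl⟩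
    rintro ⟨a, d, h, -⟩
    simpa using h 0
  · refine ⟨Fintype.card (Fin n → ZMod m), ?_⟩
    rintro s ⟨B, -, rfl⟩
    exact Finset.card_le_univ B

lemma crt_equiv_aux (N n : ℕ) (h : Nat.Coprime 2 N) :
    Nonempty ((Fin n → ZMod (2 * N)) ≃+ (Fin n → ZMod 2) × (Fin n → ZMod N)) := by
  let f := (ZMod.chineseRemainder h).toAddEquiv
  refine ⟨{ toFun := fun v => (fun i => (f (v i)).1, fun i => (f (v i)).2)
            invFun := fun w i => f.symm (w.1 i, w.2 i)
            left_inv := ?_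
            right_inv := ?_
            map_add' := ?_ }⟩
  · intro v; funext i; simp
  · intro w; ext i <;> simp
  · intro v w; ext i <;> simp

theorem r3_two_mod_four (M : ℕ) (n : ℕ) (hn : 1 ≤ n) :
    rAP 3 (4 * M + 2) n = 2 ^ n * rAP 3 (2 * M + 1) n := by
  classical
  have h42 : 4 * M + 2 = 2 * (2 * M + 1) := by ring
  rw [h42]
  have hc : Nat.Coprime 2 (2 * M + 1) := by simp
  generalize hN : 2 * M + 1 = N at *
  have : NeZero N := ⟨by omega⟩
  have : NeZero (2 * N) := ⟨by omega⟩
  obtain ⟨e⟩ := crt_equiv_aux N n hc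
  have hcard : Fintype.card (Fin n → ZMod 2) = 2 ^ n := by simp [ZMod.card]
  apply le_antisymm
  · obtain ⟨A, hA, hAc⟩ := rAP_mem_aux (2 * N) n
    rw [← hAc, Finset.card_eq_sum_card_fiberwise (f := fun a => (e a).1)
      (t := Finset.univ) (by intro a _; simp)]
    rw [← hcard, ← Finset.card_univ]
    refine (Finset.sum_le_card_nsmul _ _ (rAP 3 N n) ?_).trans_eq (smul_eq_mul _ _)
    intro x _
    have hinj : Set.InjOn (fun a => (e a).2) (A.filter fun a => (e a).1 = x) := by
      intro a ha b hb hab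
      simp only [Finset.coe_filter, Set.mem_setOf_eq] at ha hb
      exact e.injective (Prod.ext (ha.2.trans hb.2.symm) hab)
    rw [← Finset.card_image_of_injOn hinj]
    apply rAP_le_aux
    rintro ⟨b, d, hm, hi⟩
    have key : ∀ i : ℕ, e.symm (x, b) + i • e.symm (0, d) = e.symm (x, b + i • d) := by
      intro i
      rw [← map_nsmul, ← map_add]
      simp
    refine hA ⟨e.symm (x, b), e.symm (0, d), ?_, ?_⟩
    · intro i
      rw [key]
      have := hm i
      simp only [Finset.coe_image, Set.mem_image, Finset.coe_filter, Set.mem_setOf_eq] at this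
      obtain ⟨a, ⟨ha, hx⟩, hb⟩ := this
      rw [← hb, ← hx]
      simpa using ha
    · intro i j hij
      simp only [key] at hij
      exact hi (Prod.ext_iff.1 (e.symm.injective hij)).2
  · obtain ⟨B, hB, hBc⟩ := rAP_mem_aux N n
    rw [← hBc, ← hcard, ← Finset.card_univ, ← Finset.card_product,
      ← Finset.card_map e.symm.toEquiv.toEmbedding]
    apply rAP_le_aux
    rintro ⟨a, d, hm, hi⟩
    have h2 : 2 • (e d).2 ≠ 0 := by
      intro h0
      have h1 : 2 • d = 0 := by
        apply e.injective
        rw [map_nsmul, map_zero]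
        refine Prod.ext ?_ h0
        funext i
        simp only [Prod.smul_fst, Pi.smul_apply, Prod.fst_zero, Pi.zero_apply]
        generalize (e d).1 i = z
        revert z
        decide
      have := @hi 0 2 (by simp [h1])
      exact absurd this (by decide)
    have h1 : (e d).2 ≠ 0 := by
      intro h; apply h2; rw [h, smul_zero]
    refine hB ⟨(e a).2, (e d).2, ?_, ?_⟩
    · intro i
      have := hm i
      simp only [Finset.coe_map, Set.mem_image] at this
      obtain ⟨w, hw, hw2⟩ := this
      have h3 : w = e (a + (i : ℕ) • d) := by rw [← hw2]; simp
      rw [h3, map_add, map_nsmul] at hw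
      exact (Finset.mem_product.1 (Finset.mem_coe.1 hw)).2
    · intro i j hij
      have hij' : (i : ℕ) • (e d).2 = (j : ℕ) • (e d).2 := add_left_cancel hij
      clear hij hm
      generalize (e d).2 = z at h1 h2 hij'
      have e0 : 0 • z = 0 := zero_nsmul z
      have e1 : 1 • z = z := one_nsmul z
      have e3 : 2 • z ≠ z := by
        rw [two_nsmul]
        simpa using h1
      obtain ⟨i, hi'⟩ := i
      obtain ⟨j, hj'⟩ := j
      simp only [Fin.mk.injEq] at hij' ⊢
      interval_cases i <;> interval_cases j <;> first | rfl | (exfalso; rw [e0] at hij'; first | exact h2 hij' | exact h2 hij'.symm | exact h1 (e1.symm.trans hij') | exact h1 (e1.symm.trans hij'.symm)) | (exfalso; rw [e1] at hij'; first | exact e3 hij' | exact e3 hij'.symm)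
end

section
/- The set A = {0,1,2,3,4} ⊆ ℤ/6ℤ contains no 6-term arithmetic progression of pairwise distinct elements, but the product set A × A ⊆ (ℤ/6ℤ)^2 does contain a 6-term arithmetic progression of pairwise distinct elements, namely (0,0), (2,3), (4,0), (0,3), (2,0), (4,3) (with common difference (2,3)). In particular, the direct product of two 6AP-free sets need not be 6AP-free. -/
theorem product_construction_fails :
    ¬ IsDistinctAP 6 ({0, 1, 2, 3, 4} : Set (ZMod 6)) ∧
    (∀ i : Fin 6, ((0, 0) : ZMod 6 × ZMod 6) + (i : ℕ) • ((2, 3) : ZMod 6 × ZMod 6) ∈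
      ({0, 1, 2, 3, 4} : Set (ZMod 6)) ×ˢ ({0, 1, 2, 3, 4} : Set (ZMod 6))) ∧
    (Function.Injective fun i : Fin 6 =>
      ((0, 0) : ZMod 6 × ZMod 6) + (i : ℕ) • ((2, 3) : ZMod 6 × ZMod 6)) ∧
    IsDistinctAP 6 (({0, 1, 2, 3, 4} : Set (ZMod 6)) ×ˢ ({0, 1, 2, 3, 4} : Set (ZMod 6))) := by
  have h2 : ∀ i : Fin 6, ((0, 0) : ZMod 6 × ZMod 6) + (i : ℕ) • ((2, 3) : ZMod 6 × ZMod 6) ∈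
      ({0, 1, 2, 3, 4} : Set (ZMod 6)) ×ˢ ({0, 1, 2, 3, 4} : Set (ZMod 6)) := by
    intro i
    simp only [Set.mem_prod, Set.mem_insert_iff, Set.mem_singleton_iff]
    revert i
    decide
  have h3 : Function.Injective fun i : Fin 6 =>
      ((0, 0) : ZMod 6 × ZMod 6) + (i : ℕ) • ((2, 3) : ZMod 6 × ZMod 6) := by
    decide
  refine ⟨?_, h2, h3, _, _, h2, h3⟩
  rintro ⟨a, d, hA, hinj⟩
  have hs : Function.Surjective fun i : Fin 6 => a + (i : ℕ) • d :=
    ((Fintype.bijective_iff_injective_and_card _).2 ⟨hinj, by simp [ZMod.card]⟩).2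
  obtain ⟨i, hi⟩ := hs 5
  have h := hA i
  simp only at hi
  rw [hi] at h
  simp only [Set.mem_insert_iff, Set.mem_singleton_iff] at h
  revert h
  decide
end
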